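/- Let f be a nonzero binary octavic over an algebraically closed field k with char k ∉ {2,3,5,7}. Then f has a root of multiplicity exactly four if and only if there exists r ∈ k, r ≠ 0, such that J_2(f) = 2r^2, J_3(f) = 2^2·3·r^3, J_4(f) = 2^6·r^4, J_5(f) = 2^6·r^5, J_6(f) = 2^9·r^6, J_7(f) = 2^9·r^7 and J_8(f) = 2^{11}·3^2·r^8. Moreover, if f(x,y) = x^4(a x^4 + b x^3 y + c x^2 y^2 + d x y^3 + e y^4), then these identities hold with r = e. -/

import Mathlib

noncomputable section

open MvPolynomial


variable {k : Type*} [Field k]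

/-- char k not in {2,3,5,7} -/
def CharOK (k : Type*) [Field k] : Prop :=
  ringChar k ≠ 2 ∧ ringChar k ≠ 3 ∧ ringChar k ≠ 5 ∧ ringChar k ≠ 7

/-- the r-th transvectant of binary forms f, g of degrees n and m -/
def transvectant (n m r : ℕ) (f g : MvPolynomial (Fin 2) k) : MvPolynomial (Fin 2) k :=
  C ((((m - r).factorial * (n - r).factorial : ℕ) : k) /
      ((n.factorial * m.factorial : ℕ) : k)) *
    ∑ j ∈ Finset.range (r + 1),
      C ((-1 : k) ^ j * (r.choose j : k)) *
        ((fun p => pderiv (0 : Fin 2) p)^[r - j] ((fun p => pderiv (1 : Fin 2) p)^[j] f)) *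
        ((fun p => pderiv (0 : Fin 2) p)^[j] ((fun p => pderiv (1 : Fin 2) p)^[r - j] g))

/-- the binary octavic with coefficient vector a -/
def octForm (a : Fin 9 → k) : MvPolynomial (Fin 2) k :=
  ∑ i : Fin 9, C (a i) * X 0 ^ (i : ℕ) * X 1 ^ (8 - (i : ℕ))

def covg (a : Fin 9 → k) := transvectant 8 8 4 (octForm a) (octForm a)
def covk (a : Fin 9 → k) := transvectant 8 8 6 (octForm a) (octForm a)
def covh (a : Fin 9 → k) := transvectant 4 4 2 (covk a) (covk a)
def covm (a : Fin 9 → k) := transvectant 8 4 4 (octForm a) (covk a)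
def covn (a : Fin 9 → k) := transvectant 8 4 4 (octForm a) (covh a)
def covp (a : Fin 9 → k) := transvectant 8 4 4 (covg a) (covk a)
def covq (a : Fin 9 → k) := transvectant 8 4 4 (covg a) (covh a)

def J2 (a : Fin 9 → k) : k :=
  (2 ^ 2 * 5 * 7 : k) * constantCoeff (transvectant 8 8 8 (octForm a) (octForm a))
def J3 (a : Fin 9 → k) : k :=
  ((2 ^ 4 * 5 ^ 2 * 7 ^ 3 : k) / 3) * constantCoeff (transvectant 8 8 8 (octForm a) (covg a))
def J4 (a : Fin 9 → k) : k :=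
  (2 ^ 9 * 3 * 7 ^ 4 : k) * constantCoeff (transvectant 4 4 4 (covk a) (covk a))
def J5 (a : Fin 9 → k) : k :=
  (2 ^ 9 * 5 * 7 ^ 5 : k) * constantCoeff (transvectant 4 4 4 (covm a) (covk a))
def J6 (a : Fin 9 → k) : k :=
  (2 ^ 14 * 3 ^ 2 * 7 ^ 6 : k) * constantCoeff (transvectant 4 4 4 (covk a) (covh a))
def J7 (a : Fin 9 → k) : k :=
  (2 ^ 14 * 3 * 5 * 7 ^ 7 : k) * constantCoeff (transvectant 4 4 4 (covm a) (covh a))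
def J8 (a : Fin 9 → k) : k :=
  (2 ^ 17 * 3 * 5 ^ 2 * 7 ^ 9 : k) * constantCoeff (transvectant 4 4 4 (covp a) (covh a))
def J9 (a : Fin 9 → k) : k :=
  (2 ^ 19 * 3 ^ 2 * 5 * 7 ^ 9 : k) * constantCoeff (transvectant 4 4 4 (covn a) (covh a))
def J10 (a : Fin 9 → k) : k :=
  (2 ^ 22 * 3 ^ 2 * 5 ^ 2 * 7 ^ 11 : k) * constantCoeff (transvectant 4 4 4 (covq a) (covh a))

def Jinv : ℕ → (Fin 9 → k) → k
  | 2 => J2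
  | 3 => J3
  | 4 => J4
  | 5 => J5
  | 6 => J6
  | 7 => J7
  | 8 => J8
  | 9 => J9
  | 10 => J10
  | _ => fun _ => 0

/-- action of a 2x2 matrix on binary forms by substitution (X,Y) ↦ (aX+bY, cX+dY) -/
def substForm (g : Matrix (Fin 2) (Fin 2) k) (p : MvPolynomial (Fin 2) k) :
    MvPolynomial (Fin 2) k :=
  aeval (fun i : Fin 2 => C (g i 0) * X 0 + C (g i 1) * X 1) p

/-- coefficients of the transformed octavic -/
def octAct (g : Matrix (Fin 2) (Fin 2) k) (a : Fin 9 → k) : Fin 9 → k := fun i =>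
  coeff (Finsupp.single (0 : Fin 2) (i : ℕ) + Finsupp.single (1 : Fin 2) (8 - (i : ℕ)))
    (substForm g (octForm a))

/-- `f` has a root of multiplicity exactly `r` at the projective point `(x0 : y0)`. -/
def HasRootOfMultExactly (f : MvPolynomial (Fin 2) k) (x0 y0 : k) (r : ℕ) : Prop :=
  ¬(x0 = 0 ∧ y0 = 0) ∧ (C y0 * X 0 - C x0 * X 1) ^ r ∣ f ∧
    ¬((C y0 * X 0 - C x0 * X 1) ^ (r + 1) ∣ f)

theorem cert_c29 {R : Type*} [CommRing R] (s a1 a3 a5 a6 a7 a8 : R)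
    (hk0 : a6*s - 6*a1*a5 + 15*s^2 + 15*s - 10*a3^2 = 0)
    (hk1 : - 5*a1*a6 + a7*s + 9*a5*s - 5*a3*s - 5*a3 = 0)
    (hk2 : - 8*a6*s - 2*a1*a7 + a8*s + 34*a3*a5 - 25*s^2 - 50*s = 0)
    (hk3 : - 5*a7*s + a1*a8 + 9*a3*a6 - 5*a5*s - 5*a5 = 0)
    (hk4 : a8*s - 6*a3*a7 + 15*a6*s + 15*a6 - 10*a5^2 - 25 = 0)
    (hJ2 : a8*s - 8*a1*a7 + 28*a6*s - 56*a3*a5 + 35*s^2 + 70*s = 0)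
    (hJ8 : - 570*s^2 - 105*s - 20*a1*a5 - 7*a6*s + 60*a3^2 + 560*a1*a3 - 36*a3*a5 + 12*a1*a7 + a8*s = 0)
    (hJ3 : 4*a8*s^2 + a8*s - 4*a1*a3*a8 + 12*a1*a7*s + 12*a1*a7 - 4*a5*a7*s - 8*a3*a7*s - 22*a6*s^2 - 22*a6*s - 8*a1*a5*a6 + 3*a6^2*s + 24*a3^2*a6 - 36*a3*a5*s - 36*a3*a5 + 24*a5^2*s + 15*s^3 + 45*s^2 + 45*s = 0) :
    (123322500000 : R) * s = 0 := by
  linear_combination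
    (2099953800*a3^2 + 5471810400*s^2 + 563008320 + 5927476800*s - 7571764200*a1^2) * hJ3 +
    (189298080*a3^2*a6 - 53168839200*a3*a5*s + 10692616680*a5^2*s - 109156760640*a3^2*s -
    462488504640*a1*a5*s - 15512753760*a1^2*a8 + 887413580640*s^3 - 2498751360*a1*a3*a8 -
    66988197360*a1*a3*a6 - 459529455000*a1*a3*s + 313749353400*a1^2*a6 + 138763472976*a3*a5 -
    51509199000*a1*a3 - 65440304640*a3^2 + 92231238000*a1*a5 + 618604835040*s^2 +
    5301954000*a1*a7 - 216856393110*s - 35077460400*a1*a5*a6 + 2148332760*a1*a5*a8 -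
    10714784976*a3*a7 + 27891932040*a6 - 559062000*a1*a6*a7 + 13417488000*a1*a7*s +
    6935657400*a3*a5*a6 - 15094674000*a3*a7*s + 1006311600*a3*a6*a7 - 24061120200*a5^2 -
    171946800*a5*a7 - 118037250*a8 - 16415431200*a6*s^2 - 34325545500 - 1437588000*a6^2 +
    10631073600*a6*s - 49329000*a5^2*a8 + 986580000*a5^2*a6) * hk0 + (- 35480201040*a3^2*s +
    13660958240*a3*a5*s - 63891961960*a1*a5*s - 18228762560*s^3 - 286029320*a5^2*s -
    1647515520*a1*a3*a6 + 103450772600*a1*a3*s - 40424228800*s^2 + 10470839760*a3^2 +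
    3438610272*a1*a5 + 78967342720*a1*a3 - 30397597790*s + 19951442560*a1^2*a6 -
    707393520*a3^2*a6 - 1656953280*a1*a5*a6 + 676903500*a6 + 2294828928*a1*a7 + 910242720*a3*a5
    + 149083200*a1*a6*a7 - 230202000*a3*a5*a6 - 217047600*a3*a7 - 354333600*a5^2 + 367905600 -
    38210400*a5*a7 - 56376000*a6^2 - 5481000*a3*a5*a8 + 65772000*a5^2*a6 + 5285250*a8 -
    15143528400*a1^2*s - 15143528400*a1^2) * hk2 + (- 16587698400*a3^3 - 93076522560*a1^2*a5 -
    155127537600*a1*a3^2 + 290236714320*a1*s^2 - 24267815040*a3*s^2 + 10551250080*a5*s^2 -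
    14992508160*a1*a3*a5 - 13553646960*a3*s + 262978363200*a1*s - 11709389160*a5*s +
    12889996560*a1*a5^2 + 21483327600*a3^2*a5 - 8967354480*a1*a6 - 5827399200*a3 -
    559062000*a1*a6^2 + 526176000*a3*a6 - 739935000*a5 - 295974000*a5^3 + 32886000*a3*a5*a7 +
    443961000*a5*a6 - 30287056800*a1^2*a3) * hk3 + (19419694560*a3^2*a5 + 41741152320*a1*a5^2 +
    74643492000*a5*s^2 + 83478726240*a1*a3*a5 + 42875794080*a3^3 + 23347623600*a3*s^2 -
    364384401360*a1^2*a5 - 718359877200*a1*a3^2 + 808090175760*a1*s^2 + 673417938480*a1*s +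
    1647515520*a1*a6 - 45995258400*a5*s - 11904540480*a3*s - 2745859200*a1 - 3485389824*a3*a6 -
    17423002800*a3 - 1793470896*a1*a8 - 1006311600*a3*a6^2 - 111812400*a1*a6*a8 +
    2660477400*a5*a6 + 217047600*a3*a8 - 1447641720*a5 - 8418816000*a3*a5^2 - 1479870000*a5^3 +
    164430000*a3*a5*a7 + 88792200*a5*a8) * hk1 + (- 23860221000*a1*a3*s - 20917982400*s^3 +
    43326899280*a3^2*s + 20724903360*a1*a5*s - 16203151440*a3*a5*s + 549171840*a1^2*a6 +
    6551963040*a1*a3 - 62211969120*s^2 + 3587204880*a1*a3*a6 + 17857974960*a3^2 +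
    8023745520*a1*a5 - 23776578000*s - 1677186000*a3^2*a6 + 72349200*a1*a7 - 1320921000*a3*a5 -
    1183896000*a5^2*s + 49329000*a3*a5*a6 + 147987000*a1*a5*a6 + 147987000*a5^2 -
    4543058520*a1^2*s) * hk4 + (4045775440*a1*a3*s - 6629889280*s^3 - 1626702840*a3^2*s +
    6194898640*a3*a5*s + 219077600*a5^2*s + 33048047200*s^2 - 19741835680*a1*a3 -
    22009795920*a3^2 + 9162703480*a1*a5*s - 4987860640*a1^2*a6 + 31302015710*s +
    553581000*a1*a5*a6 + 704856600*a3^2*a6 - 267883875*a6 - 573707232*a1*a7 + 4496466240*a3*a5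
    - 37270800*a1*a6*a7 - 16443000*a3*a5*a6 + 163187640*a5^2 - 11436479208*a1*a5 -
    26528040*a5*a7 + 39463200*a6^2 + 928417455 + 5481000*a3*a5*a8 - 16443000*a5^2*a6 -
    3699675*a8 - 7571764200*a1^2*s - 7571764200*a1^2) * hJ2 + (15821050875*s - 156208500*a6 -
    186635880*a1*a5*a6 + 23889392640*s^3 - 8771886360*a1*a5*s - 14619810600*a3^2*s -
    3981565440*a3*a5*s + 1990782720*a5^2*s + 1679722920*a3^2*a6 + 40406433120*s^2 -
    4400240760*a1*a5 - 7333734600*a3^2 - 6252975360*a3*a5 + 267981750 - 24053760*a5*a7 -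
    16035840*a5^2 + 16912800*a6^2 - 1585575*a8) * hJ8

theorem cert_c59 {R : Type*} [CommRing R] (s a1 a3 a5 a6 a7 a8 : R)
    (hk0 : a6*s - 6*a1*a5 + 15*s^2 + 15*s - 10*a3^2 = 0)
    (hk1 : - 5*a1*a6 + a7*s + 9*a5*s - 5*a3*s - 5*a3 = 0)
    (hk2 : - 8*a6*s - 2*a1*a7 + a8*s + 34*a3*a5 - 25*s^2 - 50*s = 0)
    (hk3 : - 5*a7*s + a1*a8 + 9*a3*a6 - 5*a5*s - 5*a5 = 0)
    (hk4 : a8*s - 6*a3*a7 + 15*a6*s + 15*a6 - 10*a5^2 - 25 = 0)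
    (hJ2 : a8*s - 8*a1*a7 + 28*a6*s - 56*a3*a5 + 35*s^2 + 70*s = 0)
    (hJ8 : - 570*s^2 - 105*s - 20*a1*a5 - 7*a6*s + 60*a3^2 + 560*a1*a3 - 36*a3*a5 + 12*a1*a7 + a8*s = 0)
    (hJ3 : 4*a8*s^2 + a8*s - 4*a1*a3*a8 + 12*a1*a7*s + 12*a1*a7 - 4*a5*a7*s - 8*a3*a7*s - 22*a6*s^2 - 22*a6*s - 8*a1*a5*a6 + 3*a6^2*s + 24*a3^2*a6 - 36*a3*a5*s - 36*a3*a5 + 24*a5^2*s + 15*s^3 + 45*s^2 + 45*s = 0) :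
    (44604000000 : R) * s = 0 := by
  linear_combination
    (- 59472000*a1*a3*s - 29736000*a3^2*s - 9150758400*a3*a5*s - 1783763520*a3*a7*s +
    1891848000*a3^2 + 12616822350*s^2 + 889707000*a6*s + 163793750*a8*s - 11956420800*a3*a5 +
    12285026250*s + 17193000*a6 + 3314250*a8 + 2114560*a7^2*s + 1614863040*a5^2*s +
    4566706200*s^3 - 105728000*a5*a7*s + 71624400*a5^2 - 53523600*a3*a7 + 311418520*a8*s^2 +
    165200*a8^2*s + 16520000*a3^2*a8 - 9251200*a3*a5*a8 - 83806400*a5*a7 + 4626921600*a3^2*a6 +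
    1965285000 + 57532500*a6^2 + 831600000*a1*a3) * hk2 + (59472000*a3*s^2 - 356832000*a3^3 +
    47577600*a1*a3*a5 - 17841600*a3*a6*s + 92181600*a3*a8*s - 14312135040*a3^2*a5 -
    2613744000*a3*s + 27718509420*a5*s - 2935366560*a7*s - 3716685000*a5 - 245024640*a3*a5*a7 -
    6541920*a7*a8*s + 3564593088*a5*a6*s - 1319088960*a7*s^2 - 8445024*a6*a7*s +
    24343079040*a5*s^2 - 3434151168*a3*a5^2 + 21053088*a5*a8*s + 815955840*a3^2*a7 -
    9136802304*a1*a5^2 - 139734000*a5*a6 + 177156000*a3*a8 - 8920800*a5*a6^2 + 8920800*a3*a6*a8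
    - 128459520*a5^3 + 21409920*a5^2*a7 + 97618500*a5*a8 + 2993760000*a3*a6 - 2494800000*a3) *
    hk1 + (- 29736000*a1*a3*s - 2118888240*a3*a5*s + 14231649600*a3^2*s + 454861680*a3*a7*s -
    252504000*a1*a3 + 15147081600*a3^2 + 1292252640*a6*s - 35762540625*s^2 - 161818370*a8*s -
    3947635440*a3*a5 - 15800966475*s - 227986500*a6 - 2319975*a8 - 528640*a7^2*s +
    5203800*a6*a8*s + 694781640*a6*s^2 - 19131027300*s^3 - 963109392*a5^2*s - 144054400*a8*s^2
    - 1412460*a6^2*s - 1666702800*a3^2*a6 - 29114848*a5*a7*s - 9086000*a3^2*a8 +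
    8565752160*a1*a5*s + 147193200*a3*a5*a6 + 8565752160*a1*a5 + 54442500*a3*a7 +
    151426380*a5^2 - 165200*a8^2*s - 5616800*a3*a5*a8 - 28043680*a5*a7 + 19021275*a6^2 +
    1316203875) * hJ2 + (178416000*a3^2*s - 125678609280*a3*a5*s - 26801255040*a3*a7*s +
    56480558400*a3^2*a6 + 178416000*a3^2 + 2427253200*a8*s + 9002503650*a6*s - 578790720*a3*a7
    + 142401861000*s + 1564798500*a6 - 31635000*a8 - 4487598528*a5*a7*s + 84767424*a7^2*s +
    5066370120*a8*s^2 + 107049600*a3*a5*a8 + 743400*a8^2*s + 64243141200*s^3 +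
    9136802304*a5^2*s + 6898752000*a3*a5*a6 + 14739639600*a6*s^2 - 124408759680*a3*a5 +
    192550413600*s^2 + 18024000*a5*a7 + 196479000*a6^2 - 34560000*a5^2 + 42819840*a5^2*a6 -
    24978240*a5*a6*a7 - 67369050*a6*a8 + 13381200*a6^3) * hk0 + (- 118944000*a1*a3^2 -
    47763450000*a3*s^2 + 115177440*a3*a6*s + 37653705600*a3^3 - 40960754100*a3*s +
    330573600*a5*s - 361317600*a7*s - 494613000*a3 + 834986880*a3*a5^2 - 23788800*a7*s^2 -
    168603120*a3*a8*s - 15859200*a3^2*a7 + 8920800*a6*a7*s - 1009537200*a5*s^2 +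
    4460400*a5*a8*s + 22842005760*a1*a3*a5 - 231940800*a5*a6*s - 12110878080*a3^2*a5 +
    378378000*a3*a6 - 991200*a7*a8*s + 26762400*a3*a6^2 - 42026880*a3*a5*a7 - 41939100*a3*a8) *
    hk3 + (- 29736000*a1*a3 + 9413426400*a3^2 - 9799692525*s + 1205016750 - 86432640*a6*s +
    5947200*a3*a7 - 11992900500*s^2 - 42150780*a8*s + 5710501440*a1*a5 - 3027719520*a3*a5 -
    126850500*a6 - 4460400*a6^2 + 48172320*a5^2 + 5352480*a5*a7 - 10484775*a8) * hJ3 +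
    (108202500*s + 9490500*a8 + 53703000*s^2 - 76377600*a3*a5 + 10368000*a5^2 + 21427200*a3*a7
    + 2165400*a8*s + 26730000*a6^2 - 38016000*a5*a7 - 22275000*a6) * hJ8 + (139671000*s -
    1168473600*a3*a5 + 498960000*a3^2 + 580891500*s^2 + 88622100*a8*s) * hk4

theorem cert_c0 {R : Type*} [CommRing R] (a0 a1 a2 a3 a5 a6 a7 a8 : R)
    (hk0 : a0*a6 - 6*a1*a5 + 15*a2 - 10*a3^2 = 0)
    (hk1 : - 5*a1*a6 + a0*a7 + 9*a2*a5 - 5*a3 = 0)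
    (hk2 : - 8*a2*a6 - 2*a1*a7 + a0*a8 + 34*a3*a5 = 0)
    (hk3 : - 5*a2*a7 + a1*a8 + 9*a3*a6 - 5*a5 = 0)
    (hk4 : a2*a8 - 6*a3*a7 + 15*a6 - 10*a5^2 = 0)
    (hJ2 : a0*a8 - 8*a1*a7 + 28*a2*a6 - 56*a3*a5 = 0)
    (hJ8 : - 36*a3*a5 - 22*a2*a6 + 12*a1*a7 + a0*a8 = 0)
    (hJ3 : a0*a8 - 4*a1*a3*a8 + 3*a2^2*a8 + 12*a1*a7 - 4*a0*a5*a7 - 8*a2*a3*a7 - 22*a2*a6 - 8*a1*a5*a6 + 3*a0*a6^2 + 24*a3^2*a6 - 36*a3*a5 + 24*a2*a5^2 = 0) :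
    (31500 : R) * (a3 * a5) = 0 := by
  linear_combination
    (210) * hJ3 + (840*a5 - 84*a1*a8 - 756*a3*a6) * hk1 + (- 630*a6 - 126*a2*a8 + 756*a3*a7) *
    hk0 + (420*a3 - 420*a1*a6) * hk3 + (- 28*a1*a7 + 140*a3*a5 + 28*a2*a6 - 315) * hJ2 +
    (98*a2*a6 + 112*a1*a7 - 140*a3*a5 + 450) * hk2 + (- 1260*a3^2 + 1260*a2) * hk4 + (- 345) *
    hJ8


theorem core_one {k : Type*} [Field k] (n2 : (2:k) ≠ 0) (n3 : (3:k) ≠ 0) (n5 : (5:k) ≠ 0)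
    (n7 : (7:k) ≠ 0) (s a1 a3 a5 a6 a7 a8 : k)
    (hk0 : a6*s - 6*a1*a5 + 15*s^2 + 15*s - 10*a3^2 = 0)
    (hk1 : - 5*a1*a6 + a7*s + 9*a5*s - 5*a3*s - 5*a3 = 0)
    (hk2 : - 8*a6*s - 2*a1*a7 + a8*s + 34*a3*a5 - 25*s^2 - 50*s = 0)
    (hk3 : - 5*a7*s + a1*a8 + 9*a3*a6 - 5*a5*s - 5*a5 = 0)
    (hk4 : a8*s - 6*a3*a7 + 15*a6*s + 15*a6 - 10*a5^2 - 25 = 0)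
    (hJ2 : a8*s - 8*a1*a7 + 28*a6*s - 56*a3*a5 + 35*s^2 + 70*s = 0)
    (hJ8 : - 570*s^2 - 105*s - 20*a1*a5 - 7*a6*s + 60*a3^2 + 560*a1*a3 - 36*a3*a5 + 12*a1*a7 + a8*s = 0)
    (hJ3 : 4*a8*s^2 + a8*s - 4*a1*a3*a8 + 12*a1*a7*s + 12*a1*a7 - 4*a5*a7*s - 8*a3*a7*s - 22*a6*s^2 - 22*a6*s - 8*a1*a5*a6 + 3*a6^2*s + 24*a3^2*a6 - 36*a3*a5*s - 36*a3*a5 + 24*a5^2*s + 15*s^3 + 45*s^2 + 45*s = 0) :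
    s = 0 ∧ a1 = 0 ∧ a3 = 0 := by
  have hs : s = 0 := by
    have h1 := cert_c29 s a1 a3 a5 a6 a7 a8 hk0 hk1 hk2 hk3 hk4 hJ2 hJ8 hJ3
    have h2 := cert_c59 s a1 a3 a5 a6 a7 a8 hk0 hk1 hk2 hk3 hk4 hJ2 hJ8 hJ3
    have e1 : (29:k) * s = 0 := by
      have : (2^5*3^5*5^7*7 : k) * (29 * s) = 0 := by linear_combination h1
      rcases mul_eq_zero.1 this with h | h
      · exfalso; revert h; simp [n2, n3, n5, n7]
      · exact h
    have e2 : (59:k) * s = 0 := by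
      have : (2^8*3^3*5^6*7 : k) * (59 * s) = 0 := by linear_combination h2
      rcases mul_eq_zero.1 this with h | h
      · exfalso; revert h; simp [n2, n3, n5, n7]
      · exact h
    linear_combination e2 - 2 * e1
  subst hs
  have p3 : a3 * a5 = 0 := by
    have : (2^6*3 : k) * (a3 * a5) = 0 := by linear_combination 4 * hk2 - hJ2
    simpa [n2, n3] using this
  have p1 : a1 * a7 = 0 := by
    have : (2 : k) * (a1 * a7) = 0 := by linear_combination 34 * p3 - hk2
    simpa [n2] using this
  have h3 : a3 = 0 := by
    have : (2*5 : k) * a3^3 = 0 := by linear_combination -a3 * hk0 - 6 * a1 * p3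
    simpa [n2, n5] using this
  subst h3
  have h5 : a1 * a5 = 0 := by
    have : (2*3 : k) * (a1 * a5) = 0 := by linear_combination - hk0
    simpa [n2, n3] using this
  have h6 : a1 * a6 = 0 := by
    have : (5 : k) * (a1 * a6) = 0 := by linear_combination - hk1
    simpa [n5] using this
  refine ⟨rfl, ?_, rfl⟩
  have : (5^2 : k) * a1 = 0 := by linear_combination -a1 * hk4 + 15 * h6 - 10 * a5 * h5
  simpa [n5] using this

theorem core_zero {k : Type*} [Field k] (n2 : (2:k) ≠ 0) (n3 : (3:k) ≠ 0) (n5 : (5:k) ≠ 0)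
    (n7 : (7:k) ≠ 0) (a0 a1 a2 a3 a5 a6 a7 a8 : k)
    (hk0 : a0*a6 - 6*a1*a5 + 15*a2 - 10*a3^2 = 0)
    (hk1 : - 5*a1*a6 + a0*a7 + 9*a2*a5 - 5*a3 = 0)
    (hk2 : - 8*a2*a6 - 2*a1*a7 + a0*a8 + 34*a3*a5 = 0)
    (hk3 : - 5*a2*a7 + a1*a8 + 9*a3*a6 - 5*a5 = 0)
    (hk4 : a2*a8 - 6*a3*a7 + 15*a6 - 10*a5^2 = 0)
    (hJ2 : a0*a8 - 8*a1*a7 + 28*a2*a6 - 56*a3*a5 = 0)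
    (hJ8 : - 36*a3*a5 - 22*a2*a6 + 12*a1*a7 + a0*a8 = 0)
    (hJ3 : a0*a8 - 4*a1*a3*a8 + 3*a2^2*a8 + 12*a1*a7 - 4*a0*a5*a7 - 8*a2*a3*a7 - 22*a2*a6 - 8*a1*a5*a6 + 3*a0*a6^2 + 24*a3^2*a6 - 36*a3*a5 + 24*a2*a5^2 = 0) :
    (a0 = 0 ∧ a1 = 0 ∧ a2 = 0 ∧ a3 = 0) ∨ (a5 = 0 ∧ a6 = 0 ∧ a7 = 0 ∧ a8 = 0) := by
  have p3 : a3 * a5 = 0 := by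
    have h1 := cert_c0 a0 a1 a2 a3 a5 a6 a7 a8 hk0 hk1 hk2 hk3 hk4 hJ2 hJ8 hJ3
    have : (2^2*3^2*5^3*7 : k) * (a3 * a5) = 0 := by linear_combination h1
    simpa [n2, n3, n5, n7] using this
  have p2 : a2 * a6 = 0 := by
    have : (2*3*5*7 : k) * (a2 * a6) = 0 := by
      linear_combination 3 * (hJ8 - hk2) - 7 * (hk2 - hJ2) + 840 * p3
    simpa [n2, n3, n5, n7] using this
  have p1 : a1 * a7 = 0 := by
    have : (2*3 : k) * (a1 * a7) = 0 := by
      linear_combination hk2 - hJ2 + 36 * p2 - 90 * p3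
    simpa [n2, n3] using this
  have p0 : a0 * a8 = 0 := by linear_combination hk2 + 2 * p1 + 8 * p2 - 34 * p3
  have n10 : (10:k) ≠ 0 := by
    have : (10:k) = 2 * 5 := by norm_num
    rw [this]; exact mul_ne_zero n2 n5
  have n15 : (15:k) ≠ 0 := by
    have : (15:k) = 3 * 5 := by norm_num
    rw [this]; exact mul_ne_zero n3 n5
  have n6 : (6:k) ≠ 0 := by
    have : (6:k) = 2 * 3 := by norm_num
    rw [this]; exact mul_ne_zero n2 n3
  have n9 : (9:k) ≠ 0 := by
    have : (9:k) = 3 * 3 := by norm_num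
    rw [this]; exact mul_ne_zero n3 n3
  have h5 : a3 = 0 → a5 = 0 := by
    intro h
    subst h
    by_contra h5
    by_cases h1 : a1 = 0
    · subst h1
      have h2 : a2 ≠ 0 := by rintro rfl; apply h5; simpa [n5] using hk3
      have h6 : a6 = 0 := by simpa [h2] using p2
      subst h6
      apply h2; simpa [n15] using hk0
    · have h7 : a7 = 0 := by simpa [h1] using p1
      subst h7
      have h8 : a8 ≠ 0 := by rintro rfl; apply h5; simpa [n5] using hk3
      have h0 : a0 = 0 := by simpa [h8] using p0
      subst h0
      have h2 : a2 ≠ 0 := by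
        rintro rfl; simp [n6, h1, h5] at hk0
      have h6 : a6 = 0 := by simpa [h2] using p2
      subst h6
      simp [n9, h2, h5] at hk1
  have h3 : a5 = 0 → a3 = 0 := by
    intro h
    subst h
    by_contra h5
    by_cases h1 : a7 = 0
    · subst h1
      have h2 : a6 ≠ 0 := by rintro rfl; apply h5; simpa [n5] using hk1
      have h6 : a2 = 0 := by simpa [h2] using p2
      subst h6
      apply h2; simpa [n15] using hk4
    · have h7 : a1 = 0 := by simpa [h1] using p1
      subst h7
      have h8 : a0 ≠ 0 := by rintro rfl; apply h5; simpa [n5] using hk1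
      have h0 : a8 = 0 := by simpa [h8] using p0
      subst h0
      have h2 : a6 ≠ 0 := by
        rintro rfl; simp [n6, h1, h5] at hk4
      have h6 : a2 = 0 := by simpa [h2] using p2
      subst h6
      simp [n9, h2, h5] at hk3
  have e3 : a3 = 0 := by
    rcases mul_eq_zero.1 p3 with h | h
    · exact h
    · exact h3 h
  have e5 := h5 e3
  subst e3 e5
  have e2 : a2 = 0 := by
    rcases mul_eq_zero.1 p2 with h | h
    · exact h
    · subst h; simpa [n15] using hk0
  subst e2
  have e6 : a6 = 0 := by simpa [n15] using hk4
  subst e6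
  have q1 : a0 * a7 = 0 := by simpa using hk1
  have q3 : a1 * a8 = 0 := by simpa using hk3
  by_cases h0 : a0 = 0
  · by_cases h1 : a1 = 0
    · left; simp [h0, h1]
    · right; simp [h1] at p1 q3; simp [p1, q3]
  · right; simp [h0] at p0 q1; simp [p0, q1]

/-- unnormalised transvectant, recursively -/
def TT : ℕ → MvPolynomial (Fin 2) k → MvPolynomial (Fin 2) k → MvPolynomial (Fin 2) k
  | 0, f, g => f * g
  | r + 1, f, g => TT r (pderiv 0 f) (pderiv 1 g) - TT r (pderiv 1 f) (pderiv 0 g)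

theorem TT_lin_left (r : ℕ) (c d : k) (f f' g : MvPolynomial (Fin 2) k) :
    TT r (C c * f + C d * f') g = C c * TT r f g + C d * TT r f' g := by
  induction r generalizing f f' g with
  | zero => simp [TT]; ring
  | succ r ih => simp only [TT, map_add, pderiv_C_mul, ih]; ring

theorem TT_lin_right (r : ℕ) (c d : k) (f g g' : MvPolynomial (Fin 2) k) :
    TT r f (C c * g + C d * g') = C c * TT r f g + C d * TT r f g' := by
  induction r generalizing f g g' with
  | zero => simp [TT]; ring
  | succ r ih => simp only [TT, map_add, pderiv_C_mul, ih]; ring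

theorem pderiv_comm' (f : MvPolynomial (Fin 2) k) :
    pderiv (0 : Fin 2) (pderiv 1 f) = pderiv 1 (pderiv 0 f) := by
  induction f using MvPolynomial.induction_on with
  | C a => simp
  | add p q hp hq => simp [hp, hq]
  | mul_X p i hp =>
    fin_cases i <;> simp [Derivation.leibniz, hp, pderiv_X] <;> ring

theorem iter_comm (f : MvPolynomial (Fin 2) k) (m n : ℕ) :
    (fun p => pderiv (0 : Fin 2) p)^[m] ((fun p => pderiv (1 : Fin 2) p)^[n] f) =
    (fun p => pderiv (1 : Fin 2) p)^[n] ((fun p => pderiv (0 : Fin 2) p)^[m] f) := by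
  have : Function.Commute (fun p : MvPolynomial (Fin 2) k => pderiv (0 : Fin 2) p)
      (fun p => pderiv (1 : Fin 2) p) := fun p => pderiv_comm' p
  exact (this.iterate_iterate m n) f

theorem TT_sum (r : ℕ) (f g : MvPolynomial (Fin 2) k) :
    ∑ j ∈ Finset.range (r + 1),
      C ((-1 : k) ^ j * (r.choose j : k)) *
        ((fun p => pderiv (0 : Fin 2) p)^[r - j] ((fun p => pderiv (1 : Fin 2) p)^[j] f)) *
        ((fun p => pderiv (0 : Fin 2) p)^[j] ((fun p => pderiv (1 : Fin 2) p)^[r - j] g))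
      = TT r f g := by
  have hcomm := iter_comm (k := k)
  have hTT : ∀ r (f g : MvPolynomial (Fin 2) k), TT (r + 1) f g =
      TT r ((fun p => pderiv (0 : Fin 2) p) f) ((fun p => pderiv (1 : Fin 2) p) g) -
      TT r ((fun p => pderiv (1 : Fin 2) p) f) ((fun p => pderiv (0 : Fin 2) p) g) :=
    fun r f g => rfl
  generalize (fun p : MvPolynomial (Fin 2) k => pderiv (0 : Fin 2) p) = D0 at *
  generalize (fun p : MvPolynomial (Fin 2) k => pderiv (1 : Fin 2) p) = D1 at *
  have key : ∀ (r : ℕ) (f g : MvPolynomial (Fin 2) k),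
      ∑ ij ∈ Finset.HasAntidiagonal.antidiagonal r, (r.choose ij.1 : MvPolynomial (Fin 2) k) *
        (C ((-1 : k) ^ ij.1) * (D0^[ij.2] (D1^[ij.1] f)) * (D0^[ij.1] (D1^[ij.2] g)))
      = TT r f g := by
    intro r
    induction r with
    | zero => intro f g; simp [TT]
    | succ r ih =>
      intro f g
      have := Finset.sum_antidiagonal_choose_succ_mul
        (fun i j => C ((-1 : k) ^ i) * (D0^[j] (D1^[i] f)) * (D0^[i] (D1^[j] g))) r
      rw [this]
      rw [hTT, ← ih, ← ih, sub_eq_add_neg, ← Finset.sum_neg_distrib]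
      refine congrArg₂ _ (Finset.sum_congr rfl ?_) (Finset.sum_congr rfl ?_)
      · rintro ⟨i, j⟩ _
        simp only
        rw [Function.iterate_succ_apply D1, Function.iterate_succ_apply D0]
        rw [show (D0 (D1^[i] f)) = D1^[i] (D0 f) from hcomm f 1 i]
      · rintro ⟨i, j⟩ hij
        have hc : r.choose j = r.choose i := by
          rw [Finset.HasAntidiagonal.mem_antidiagonal] at hij
          simp only at hij
          rw [← hij]
          exact (Nat.choose_symm_add).symm
        simp only
        rw [Function.iterate_succ_apply D1, Function.iterate_succ_apply D0]
        rw [show (D0 (D1^[j] g)) = D1^[j] (D0 g) from hcomm g 1 j, hc, pow_succ]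
        simp only [map_mul, map_neg, map_one]
        ring
  rw [← key, Finset.Nat.sum_antidiagonal_eq_sum_range_succ_mk]
  apply Finset.sum_congr rfl
  intro j _
  simp only [map_mul, map_natCast]
  ring

theorem transvectant_eq (n m r : ℕ) (f g : MvPolynomial (Fin 2) k) :
    transvectant n m r f g = C ((((m - r).factorial * (n - r).factorial : ℕ) : k) /
      ((n.factorial * m.factorial : ℕ) : k)) * TT r f g := by
  rw [transvectant, TT_sum]

/-- the algebra map `s` is a unimodular substitution -/
def IsSL (s : MvPolynomial (Fin 2) k →ₐ[k] MvPolynomial (Fin 2) k) : Prop :=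
  ∃ p q u v : k, p * v - q * u = 1 ∧ s (X 0) = C p * X 0 + C q * X 1 ∧
    s (X 1) = C u * X 0 + C v * X 1

theorem chain0 (s : MvPolynomial (Fin 2) k →ₐ[k] MvPolynomial (Fin 2) k) (p q u v : k)
    (h0 : s (X 0) = C p * X 0 + C q * X 1) (h1 : s (X 1) = C u * X 0 + C v * X 1)
    (f : MvPolynomial (Fin 2) k) :
    pderiv 0 (s f) = s (C p * pderiv 0 f + C u * pderiv 1 f) ∧
    pderiv 1 (s f) = s (C q * pderiv 0 f + C v * pderiv 1 f) := by
  have hC : ∀ c, s (C c) = C c := fun c => s.commutes c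
  induction f using MvPolynomial.induction_on with
  | C a => simp [hC]
  | add f g hf hg =>
    simp only [map_add, hf, hg, map_mul]
    constructor <;> ring
  | mul_X f i hf =>
    simp only [map_mul, map_add, hC] at hf
    fin_cases i
    · simp [Derivation.leibniz, hf, pderiv_X, h0, hC]
      constructor <;> ring
    · simp [Derivation.leibniz, hf, pderiv_X, h1, hC]
      constructor <;> ring

theorem TT_sub {s : MvPolynomial (Fin 2) k →ₐ[k] MvPolynomial (Fin 2) k} (hs : IsSL s) (r : ℕ)
    (f g : MvPolynomial (Fin 2) k) : TT r (s f) (s g) = s (TT r f g) := by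
  obtain ⟨p, q, u, v, hd, h0, h1⟩ := hs
  have hC : ∀ c, s (C c) = C c := fun c => s.commutes c
  induction r generalizing f g with
  | zero => simp [TT]
  | succ r ih =>
    simp only [TT, (chain0 s p q u v h0 h1 f).1, (chain0 s p q u v h0 h1 f).2,
      (chain0 s p q u v h0 h1 g).1, (chain0 s p q u v h0 h1 g).2, ih, TT_lin_left, TT_lin_right,
      map_add, map_sub, map_mul, hC]
    have hd' : (C p * C v - C q * C u : MvPolynomial (Fin 2) k) = 1 := by
      rw [← map_mul, ← map_mul, ← map_sub, hd, map_one]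
    linear_combination (s (TT r (pderiv 0 f) (pderiv 1 g)) -
      s (TT r (pderiv 1 f) (pderiv 0 g))) * hd'

theorem transvectant_sub {s : MvPolynomial (Fin 2) k →ₐ[k] MvPolynomial (Fin 2) k} (hs : IsSL s)
    (n m r : ℕ) (f g : MvPolynomial (Fin 2) k) :
    transvectant n m r (s f) (s g) = s (transvectant n m r f g) := by
  have hC : ∀ c, s (C c) = C c := fun c => s.commutes c
  rw [transvectant_eq, transvectant_eq, TT_sub hs, map_mul, hC]

theorem cc_sub {s : MvPolynomial (Fin 2) k →ₐ[k] MvPolynomial (Fin 2) k} (hs : IsSL s)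
    (f : MvPolynomial (Fin 2) k) : constantCoeff (s f) = constantCoeff f := by
  obtain ⟨p, q, u, v, hd, h0, h1⟩ := hs
  have hC : ∀ c, s (C c) = C c := fun c => s.commutes c
  induction f using MvPolynomial.induction_on with
  | C a => simp [hC]
  | add f g hf hg => simp [hf, hg]
  | mul_X f i hf => fin_cases i <;> simp [h0, h1]

/-- binary form of degree `n` with binomially normalised coefficients `A` -/
def bf (n : ℕ) (A : ℕ → k) : MvPolynomial (Fin 2) k :=
  ∑ i ∈ Finset.range (n + 1), C ((n.choose i : k) * A i) * X 0 ^ i * X 1 ^ (n - i)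

theorem pd0_bf (n : ℕ) (A : ℕ → k) :
    pderiv 0 (bf (n + 1) A) = C ((n + 1 : ℕ) : k) * bf n (fun i => A (i + 1)) := by
  unfold bf
  rw [map_sum, Finset.sum_range_succ', Finset.mul_sum]
  simp only [pow_zero, mul_one]
  have h0 : pderiv (0 : Fin 2) (C (((n + 1).choose 0 : k) * A 0) * X 1 ^ (n + 1 - 0) :
      MvPolynomial (Fin 2) k) = 0 := by
    simp [Derivation.leibniz, Derivation.leibniz_pow, pderiv_X]
  rw [h0, add_zero]
  apply Finset.sum_congr rfl
  intro i _
  have hc : (((n + 1).choose (i + 1) : ℕ) : k) * ((i + 1 : ℕ) : k) =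
      ((n + 1 : ℕ) : k) * (n.choose i : k) := by
    rw [← Nat.cast_mul, ← Nat.cast_mul, Nat.add_one_mul_choose_eq n i]
  have hc' : (C (((n + 1).choose (i + 1) : ℕ) : k) * C ((i + 1 : ℕ) : k) :
      MvPolynomial (Fin 2) k) = C ((n + 1 : ℕ) : k) * C (n.choose i : k) := by
    rw [← map_mul, hc, map_mul]
  have e : n + 1 - (i + 1) = n - i := by omega
  rw [e]
  simp only [Derivation.leibniz, Derivation.leibniz_pow, pderiv_X, map_mul, pderiv_C, smul_eq_mul]
  simp only [Pi.single_apply, nsmul_eq_mul, ← map_natCast (C : k →+* MvPolynomial (Fin 2) k)]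
  simp
  simp only [map_natCast, Nat.cast_add, Nat.cast_one, map_add, map_one] at hc'
  linear_combination (C (A (i+1)) * X 0 ^ i * X 1 ^ (n - i)) * hc'

theorem pd1_bf (n : ℕ) (A : ℕ → k) :
    pderiv 1 (bf (n + 1) A) = C ((n + 1 : ℕ) : k) * bf n A := by
  unfold bf
  rw [map_sum, Finset.sum_range_succ, Finset.mul_sum]
  have h0 : pderiv (1 : Fin 2) (C (((n + 1).choose (n+1) : k) * A (n+1)) * X 0 ^ (n + 1) *
      X 1 ^ (n + 1 - (n + 1)) : MvPolynomial (Fin 2) k) = 0 := by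
    simp [Derivation.leibniz, Derivation.leibniz_pow, pderiv_X]
  rw [h0, add_zero]
  apply Finset.sum_congr rfl
  intro i hi
  have hi' : i < n + 1 := Finset.mem_range.1 hi
  obtain ⟨d, hd⟩ : ∃ d, n = i + d := ⟨n - i, by omega⟩
  have hc : (((n + 1).choose i : ℕ) : k) * ((d + 1 : ℕ) : k) =
      ((n + 1 : ℕ) : k) * (n.choose i : k) := by
    have := Nat.choose_mul_succ_eq n i
    have e : n + 1 - i = d + 1 := by omega
    rw [e] at this
    rw [← Nat.cast_mul, ← Nat.cast_mul, ← this, mul_comm]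
  have hc' : (C (((n + 1).choose i : ℕ) : k) * C ((d + 1 : ℕ) : k) :
      MvPolynomial (Fin 2) k) = C ((n + 1 : ℕ) : k) * C (n.choose i : k) := by
    rw [← map_mul, hc, map_mul]
  have e : n + 1 - i = d + 1 := by omega
  have e' : n - i = d := by omega
  rw [e, e']
  simp only [Derivation.leibniz, Derivation.leibniz_pow, pderiv_X, map_mul, pderiv_C, smul_eq_mul]
  simp only [Pi.single_apply, nsmul_eq_mul, ← map_natCast (C : k →+* MvPolynomial (Fin 2) k)]
  simp
  simp only [map_natCast, Nat.cast_add, Nat.cast_one, map_add, map_one] at hc'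
  linear_combination (C (A i) * X 0 ^ i * X 1 ^ d) * hc'

theorem iter_C_mul (i : Fin 2) (q : ℕ) (c : k) (f : MvPolynomial (Fin 2) k) :
    (fun p => pderiv i p)^[q] (C c * f) = C c * (fun p => pderiv i p)^[q] f := by
  induction q generalizing f with
  | zero => rfl
  | succ q ih => simp only [Function.iterate_succ_apply, pderiv_C_mul, ih]

theorem iter1_bf (q n : ℕ) (A : ℕ → k) :
    (fun p => pderiv (1 : Fin 2) p)^[q] (bf (n + q) A) =
      C ((n + q).descFactorial q : k) * bf n A := by
  induction q with
  | zero => simp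
  | succ q ih =>
    rw [Function.iterate_succ_apply, ← add_assoc, pd1_bf, iter_C_mul, ih, ← mul_assoc, ← map_mul,
      Nat.succ_descFactorial_succ]
    push_cast; rfl

theorem iter0_bf (q n : ℕ) (A : ℕ → k) :
    (fun p => pderiv (0 : Fin 2) p)^[q] (bf (n + q) A) =
      C ((n + q).descFactorial q : k) * bf n (fun i => A (i + q)) := by
  induction q generalizing A with
  | zero => simp
  | succ q ih =>
    rw [Function.iterate_succ_apply, ← add_assoc, pd0_bf, iter_C_mul, ih, ← mul_assoc, ← map_mul,
      Nat.succ_descFactorial_succ]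
    push_cast
    simp only [add_assoc]

theorem iter_bf (n r p q : ℕ) (h : p + q = r) (A : ℕ → k) :
    (fun p => pderiv (0 : Fin 2) p)^[p] ((fun p => pderiv (1 : Fin 2) p)^[q] (bf (n + r) A)) =
      C ((n + r).descFactorial r : k) * bf n (fun i => A (i + p)) := by
  subst h
  rw [← add_assoc, iter1_bf, iter_C_mul, iter0_bf, ← mul_assoc, ← map_mul]
  congr 2
  rw [← Nat.cast_mul]
  congr 1
  have h1 := Nat.factorial_mul_descFactorial (show p ≤ n + p by omega)
  have h2 := Nat.factorial_mul_descFactorial (show q ≤ n + p + q by omega)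
  have h3 := Nat.factorial_mul_descFactorial (show p + q ≤ n + p + q by omega)
  have e1 : n + p - p = n := by omega
  have e2 : n + p + q - q = n + p := by omega
  have e3 : n + p + q - (p + q) = n := by omega
  rw [e1] at h1; rw [e2] at h2; rw [e3] at h3
  apply Nat.eq_of_mul_eq_mul_left (Nat.factorial_pos n)
  rw [h3, ← h2, ← h1]; ring

theorem transvectant_bf (n m r : ℕ) (hn : ((n + r).factorial : k) ≠ 0)
    (hm : ((m + r).factorial : k) ≠ 0) (A B : ℕ → k) :
    transvectant (n + r) (m + r) r (bf (n + r) A) (bf (m + r) B) =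
      ∑ j ∈ Finset.range (r + 1), C ((-1 : k) ^ j * (r.choose j : k)) *
        bf n (fun i => A (i + (r - j))) * bf m (fun i => B (i + j)) := by
  unfold transvectant
  rw [Finset.mul_sum]
  apply Finset.sum_congr rfl
  intro j hj
  have hj' : j < r + 1 := Finset.mem_range.1 hj
  rw [iter_bf n r (r - j) j (by omega), iter_bf m r j (r - j) (by omega)]
  have h1 := Nat.factorial_mul_descFactorial (show r ≤ n + r by omega)
  have h2 := Nat.factorial_mul_descFactorial (show r ≤ m + r by omega)
  rw [show n + r - r = n by omega] at *
  rw [show m + r - r = m by omega] at *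
  have hcc : (((m.factorial * n.factorial : ℕ) : k) /
      (((n + r).factorial * (m + r).factorial : ℕ) : k)) * ((n + r).descFactorial r : k) *
      ((m + r).descFactorial r : k) = 1 := by
    rw [Nat.cast_mul, Nat.cast_mul]
    field_simp
    rw [← h1, ← h2]; push_cast; ring
  have hcc' : (C (((m.factorial * n.factorial : ℕ) : k) /
      (((n + r).factorial * (m + r).factorial : ℕ) : k)) * C ((n + r).descFactorial r : k) *
      C ((m + r).descFactorial r : k) : MvPolynomial (Fin 2) k) = 1 := by
    rw [← map_mul, ← map_mul, hcc, map_one]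
  linear_combination (C ((-1 : k) ^ j * (r.choose j : k)) *
        bf n (fun i => A (i + (r - j))) * bf m (fun i => B (i + j))) * hcc'

theorem C_num (n : ℕ) [n.AtLeastTwo] :
    (C (ofNat(n) : k) : MvPolynomial (Fin 2) k) = ofNat(n) := map_ofNat C n

theorem cc_num (n : ℕ) [n.AtLeastTwo] :
    constantCoeff (ofNat(n) : MvPolynomial (Fin 2) k) = ofNat(n) :=
  map_ofNat constantCoeff n

/-- coefficients of the quartic covariant -/
def kk (A : ℕ → k) : ℕ → k
  | 0 => 2*(A 0*A 6) - 12*(A 1*A 5) + 30*(A 2*A 4) - 20*(A 3*A 3)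
  | 1 => A 0*A 7 - 5*(A 1*A 6) + 9*(A 2*A 5) - 5*(A 3*A 4)
  | 2 => (A 0*A 8 - 2*(A 1*A 7) - 8*(A 2*A 6) + 34*(A 3*A 5) - 25*(A 4*A 4))/3
  | 3 => A 1*A 8 - 5*(A 2*A 7) + 9*(A 3*A 6) - 5*(A 4*A 5)
  | 4 => 2*(A 2*A 8) - 12*(A 3*A 7) + 30*(A 4*A 6) - 20*(A 5*A 5)
  | _ => 0

/-- coefficients of the octavic covariant -/
def gg (A : ℕ → k) : ℕ → k
  | 0 => 2*(A 0*A 4) - 8*(A 1*A 3) + 6*(A 2*A 2)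
  | 1 => A 0*A 5 - 3*(A 1*A 4) + 2*(A 2*A 3)
  | 2 => (3*(A 0*A 6) - 4*(A 1*A 5) - 11*(A 2*A 4) + 12*(A 3*A 3))/7
  | 3 => (A 0*A 7 + 2*(A 1*A 6) - 12*(A 2*A 5) + 9*(A 3*A 4))/7
  | 4 => (A 0*A 8 + 12*(A 1*A 7) - 22*(A 2*A 6) - 36*(A 3*A 5) + 45*(A 4*A 4))/35
  | 5 => (A 1*A 8 + 2*(A 2*A 7) - 12*(A 3*A 6) + 9*(A 4*A 5))/7
  | 6 => (3*(A 2*A 8) - 4*(A 3*A 7) - 11*(A 4*A 6) + 12*(A 5*A 5))/7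
  | 7 => A 3*A 8 - 3*(A 4*A 7) + 2*(A 5*A 6)
  | 8 => 2*(A 4*A 8) - 8*(A 5*A 7) + 6*(A 6*A 6)
  | _ => 0

/-- coefficients of the Hessian of a quartic -/
def hh (K : ℕ → k) : ℕ → k
  | 0 => 2*(K 0*K 2) - 2*(K 1*K 1)
  | 1 => K 0*K 3 - K 1*K 2
  | 2 => (K 0*K 4 + 2*(K 1*K 3) - 3*(K 2*K 2))/3
  | 3 => K 1*K 4 - K 2*K 3
  | 4 => 2*(K 2*K 4) - 2*(K 3*K 3)
  | _ => 0

/-- contraction of an octavic with a quartic -/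
def mm (A K : ℕ → k) (i : ℕ) : k :=
  A (i+4)*K 0 - 4*(A (i+3)*K 1) + 6*(A (i+2)*K 2) - 4*(A (i+1)*K 3) + A i*K 4

/-- pairing of quartics -/
def pp (K L : ℕ → k) : k :=
  K 4*L 0 - 4*(K 3*L 1) + 6*(K 2*L 2) - 4*(K 1*L 3) + K 0*L 4

/-- pairing of octavics -/
def qq (A B : ℕ → k) : k :=
  A 8*B 0 - 8*(A 7*B 1) + 28*(A 6*B 2) - 56*(A 5*B 3) + 70*(A 4*B 4) - 56*(A 3*B 5) +
    28*(A 2*B 6) - 8*(A 1*B 7) + A 0*B 8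

/-- the characteristic is admissible -/
def NZ (k : Type*) [Field k] : Prop := (2:k) ≠ 0 ∧ (3:k) ≠ 0 ∧ (5:k) ≠ 0 ∧ (7:k) ≠ 0

theorem NZ.f4 (h : NZ k) : ((4:ℕ).factorial : k) ≠ 0 := by
  obtain ⟨n2, n3, n5, n7⟩ := h
  have : ((4:ℕ).factorial : k) = 2^3*3 := by norm_num [Nat.factorial]
  rw [this]; simp [n2, n3]

theorem NZ.f8 (h : NZ k) : ((8:ℕ).factorial : k) ≠ 0 := by
  obtain ⟨n2, n3, n5, n7⟩ := h
  have : ((8:ℕ).factorial : k) = 2^7*3^2*5*7 := by norm_num [Nat.factorial]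
  rw [this]; simp [n2, n3, n5, n7]

theorem NZ.n35 (h : NZ k) : (35 : k) ≠ 0 := by
  obtain ⟨n2, n3, n5, n7⟩ := h
  have : (35 : k) = 5*7 := by norm_num
  rw [this]; simp [n5, n7]

theorem cc888 (h : NZ k) (A B : ℕ → k) :
    constantCoeff (transvectant 8 8 8 (bf 8 A) (bf 8 B)) = qq A B := by
  have := transvectant_bf 0 0 8 (by simpa using h.f8) (by simpa using h.f8) A B
  simp only [Nat.zero_add] at this
  rw [this]
  simp [C_num, cc_num, bf, Finset.sum_range_succ, Nat.choose, qq]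
  ring

theorem cc444 (h : NZ k) (A B : ℕ → k) :
    constantCoeff (transvectant 4 4 4 (bf 4 A) (bf 4 B)) = pp A B := by
  have := transvectant_bf 0 0 4 (by simpa using h.f4) (by simpa using h.f4) A B
  simp only [Nat.zero_add] at this
  rw [this]
  simp [C_num, cc_num, bf, Finset.sum_range_succ, Nat.choose, pp]
  ring

theorem tr844 (h : NZ k) (A K : ℕ → k) :
    transvectant 8 4 4 (bf 8 A) (bf 4 K) = bf 4 (mm A K) := by
  have := transvectant_bf 4 0 4 (by simpa using h.f8) (by simpa using h.f4) A K
  simp only [Nat.zero_add, Nat.reduceAdd] at this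
  rw [this]
  simp [C_num, cc_num, bf, Finset.sum_range_succ, Nat.choose, mm]
  ring

theorem tr442 (h : NZ k) (K : ℕ → k) :
    transvectant 4 4 2 (bf 4 K) (bf 4 K) = bf 4 (hh K) := by
  have := transvectant_bf 2 2 2 (by simpa using h.f4) (by simpa using h.f4) K K
  simp only [Nat.reduceAdd] at this
  rw [this]
  have h2 : 3 * hh K 2 = K 0*K 4 + 2*(K 1*K 3) - 3*(K 2*K 2) := by
    have := h.2.1
    simp only [hh]; field_simp
  have h2' := congrArg (C : k → MvPolynomial (Fin 2) k) h2
  generalize hH : hh K 2 = H2 at *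
  simp [C_num, cc_num, bf, Finset.sum_range_succ, Nat.choose, hH]
  simp [C_num, hh]
  simp [C_num] at h2'
  linear_combination (-2 * X 0 ^ 2 * X 1 ^ 2) * h2'

theorem tr886 (h : NZ k) (A : ℕ → k) :
    transvectant 8 8 6 (bf 8 A) (bf 8 A) = bf 4 (kk A) := by
  have := transvectant_bf 2 2 6 (by simpa using h.f8) (by simpa using h.f8) A A
  simp only [Nat.reduceAdd] at this
  rw [this]
  have h2 : 3 * kk A 2 = A 0*A 8 - 2*(A 1*A 7) - 8*(A 2*A 6) + 34*(A 3*A 5) - 25*(A 4*A 4) := by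
    have := h.2.1
    simp only [kk]; field_simp
  have h2' := congrArg (C : k → MvPolynomial (Fin 2) k) h2
  generalize hH : kk A 2 = H2 at *
  simp [C_num, cc_num, bf, Finset.sum_range_succ, Nat.choose, hH]
  simp [C_num, kk]
  simp [C_num] at h2'
  linear_combination (-2 * X 0 ^ 2 * X 1 ^ 2) * h2'

set_option maxHeartbeats 1000000 in
theorem tr884 (h : NZ k) (A : ℕ → k) :
    transvectant 8 8 4 (bf 8 A) (bf 8 A) = bf 8 (gg A) := by
  have := transvectant_bf 4 4 4 (by simpa using h.f8) (by simpa using h.f8) A A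
  simp only [Nat.reduceAdd] at this
  rw [this]
  have n7 := h.2.2.2
  have n35 := h.n35
  have h2 : 7 * gg A 2 = 3*(A 0*A 6) - 4*(A 1*A 5) - 11*(A 2*A 4) + 12*(A 3*A 3) := by
    simp only [gg]; field_simp
  have h3 : 7 * gg A 3 = A 0*A 7 + 2*(A 1*A 6) - 12*(A 2*A 5) + 9*(A 3*A 4) := by
    simp only [gg]; field_simp
  have h4 : 35 * gg A 4 = A 0*A 8 + 12*(A 1*A 7) - 22*(A 2*A 6) - 36*(A 3*A 5) + 45*(A 4*A 4) := by
    simp only [gg]; field_simp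
  have h5 : 7 * gg A 5 = A 1*A 8 + 2*(A 2*A 7) - 12*(A 3*A 6) + 9*(A 4*A 5) := by
    simp only [gg]; field_simp
  have h6 : 7 * gg A 6 = 3*(A 2*A 8) - 4*(A 3*A 7) - 11*(A 4*A 6) + 12*(A 5*A 5) := by
    simp only [gg]; field_simp
  replace h2 := congrArg (C : k → MvPolynomial (Fin 2) k) h2
  replace h3 := congrArg (C : k → MvPolynomial (Fin 2) k) h3
  replace h4 := congrArg (C : k → MvPolynomial (Fin 2) k) h4
  replace h5 := congrArg (C : k → MvPolynomial (Fin 2) k) h5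
  replace h6 := congrArg (C : k → MvPolynomial (Fin 2) k) h6
  generalize hH2 : gg A 2 = H2 at *
  generalize hH3 : gg A 3 = H3 at *
  generalize hH4 : gg A 4 = H4 at *
  generalize hH5 : gg A 5 = H5 at *
  generalize hH6 : gg A 6 = H6 at *
  simp [C_num, cc_num, bf, Finset.sum_range_succ, Nat.choose, hH2, hH3, hH4, hH5, hH6]
  simp [C_num, gg]
  simp [C_num] at h2 h3 h4 h5 h6
  linear_combination (-4 * X 0 ^ 2 * X 1 ^ 6) * h2 + (-8 * X 0 ^ 3 * X 1 ^ 5) * h3 +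
    (-2 * X 0 ^ 4 * X 1 ^ 4) * h4 + (-8 * X 0 ^ 5 * X 1 ^ 3) * h5 + (-4 * X 0 ^ 6 * X 1 ^ 2) * h6

/-- the seven invariant identities for a form -/
def JP (F : MvPolynomial (Fin 2) k) (r : k) : Prop :=
  (2 ^ 2 * 5 * 7 : k) * constantCoeff (transvectant 8 8 8 F F) = 2 * r ^ 2 ∧
  ((2 ^ 4 * 5 ^ 2 * 7 ^ 3 : k) / 3) *
    constantCoeff (transvectant 8 8 8 F (transvectant 8 8 4 F F)) = 2 ^ 2 * 3 * r ^ 3 ∧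
  (2 ^ 9 * 3 * 7 ^ 4 : k) * constantCoeff (transvectant 4 4 4 (transvectant 8 8 6 F F)
    (transvectant 8 8 6 F F)) = 2 ^ 6 * r ^ 4 ∧
  (2 ^ 9 * 5 * 7 ^ 5 : k) * constantCoeff (transvectant 4 4 4
    (transvectant 8 4 4 F (transvectant 8 8 6 F F)) (transvectant 8 8 6 F F)) = 2 ^ 6 * r ^ 5 ∧
  (2 ^ 14 * 3 ^ 2 * 7 ^ 6 : k) * constantCoeff (transvectant 4 4 4 (transvectant 8 8 6 F F)
    (transvectant 4 4 2 (transvectant 8 8 6 F F) (transvectant 8 8 6 F F))) = 2 ^ 9 * r ^ 6 ∧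
  (2 ^ 14 * 3 * 5 * 7 ^ 7 : k) * constantCoeff (transvectant 4 4 4
    (transvectant 8 4 4 F (transvectant 8 8 6 F F))
    (transvectant 4 4 2 (transvectant 8 8 6 F F) (transvectant 8 8 6 F F))) = 2 ^ 9 * r ^ 7 ∧
  (2 ^ 17 * 3 * 5 ^ 2 * 7 ^ 9 : k) * constantCoeff (transvectant 4 4 4
    (transvectant 8 4 4 (transvectant 8 8 4 F F) (transvectant 8 8 6 F F))
    (transvectant 4 4 2 (transvectant 8 8 6 F F) (transvectant 8 8 6 F F))) =
    2 ^ 11 * 3 ^ 2 * r ^ 8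

theorem JP_oct (a : Fin 9 → k) (r : k) : JP (octForm a) r ↔
    (J2 a = 2 * r ^ 2 ∧ J3 a = 2 ^ 2 * 3 * r ^ 3 ∧ J4 a = 2 ^ 6 * r ^ 4 ∧
        J5 a = 2 ^ 6 * r ^ 5 ∧ J6 a = 2 ^ 9 * r ^ 6 ∧ J7 a = 2 ^ 9 * r ^ 7 ∧
        J8 a = 2 ^ 11 * 3 ^ 2 * r ^ 8) := Iff.rfl

theorem JP_sub {s : MvPolynomial (Fin 2) k →ₐ[k] MvPolynomial (Fin 2) k} (hs : IsSL s)
    (F : MvPolynomial (Fin 2) k) (r : k) : JP (s F) r ↔ JP F r := by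
  unfold JP
  simp only [transvectant_sub hs, cc_sub hs]

theorem JP_bf (h : NZ k) (A : ℕ → k) (r : k) : JP (bf 8 A) r ↔
    ((2 ^ 2 * 5 * 7 : k) * qq A A = 2 * r ^ 2 ∧
    ((2 ^ 4 * 5 ^ 2 * 7 ^ 3 : k) / 3) * qq A (gg A) = 2 ^ 2 * 3 * r ^ 3 ∧
    (2 ^ 9 * 3 * 7 ^ 4 : k) * pp (kk A) (kk A) = 2 ^ 6 * r ^ 4 ∧
    (2 ^ 9 * 5 * 7 ^ 5 : k) * pp (mm A (kk A)) (kk A) = 2 ^ 6 * r ^ 5 ∧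
    (2 ^ 14 * 3 ^ 2 * 7 ^ 6 : k) * pp (kk A) (hh (kk A)) = 2 ^ 9 * r ^ 6 ∧
    (2 ^ 14 * 3 * 5 * 7 ^ 7 : k) * pp (mm A (kk A)) (hh (kk A)) = 2 ^ 9 * r ^ 7 ∧
    (2 ^ 17 * 3 * 5 ^ 2 * 7 ^ 9 : k) * pp (mm (gg A) (kk A)) (hh (kk A)) =
      2 ^ 11 * 3 ^ 2 * r ^ 8) := by
  unfold JP
  simp only [tr884 h, tr886 h, tr844 h, tr442 h, cc888 h, cc444 h]

/-- the binomially normalised coefficients of an octavic -/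
def nrm (a : Fin 9 → k) (i : ℕ) : k := if h : i < 9 then a ⟨i, h⟩ / (Nat.choose 8 i : k) else 0

theorem choose8 (h : NZ k) (i : ℕ) (hi : i < 9) : (Nat.choose 8 i : k) ≠ 0 := by
  intro h0
  have h8 := h.f8
  have := Nat.choose_mul_factorial_mul_factorial (show i ≤ 8 by omega)
  apply h8
  rw [← this]; push_cast; rw [h0]; simp

theorem choose4 (h : NZ k) (i : ℕ) (hi : i < 5) : (Nat.choose 4 i : k) ≠ 0 := by
  intro h0
  have h8 := h.f4
  have := Nat.choose_mul_factorial_mul_factorial (show i ≤ 4 by omega)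
  apply h8
  rw [← this]; push_cast; rw [h0]; simp

theorem oct_bf (h : NZ k) (a : Fin 9 → k) : octForm a = bf 8 (nrm a) := by
  unfold octForm bf
  rw [Finset.sum_range]
  apply Finset.sum_congr rfl
  intro i _
  have := choose8 h i i.2
  have e : (Nat.choose 8 i : k) * nrm a i = a i := by
    simp only [nrm, dif_pos i.2, Fin.eta]
    field_simp
  rw [e]

theorem NZ_of (hk : CharOK k) : NZ k := by
  have key : ∀ p : ℕ, p.Prime → (p : k) = 0 → ringChar k = p := by
    intro p hp h0
    have h1 := ringChar.dvd h0
    rcases (Nat.dvd_prime hp).1 h1 with h | h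
    · have : (ringChar k : k) = 0 := ringChar.Nat.cast_ringChar
      rw [h] at this; simp at this
    · exact h
  obtain ⟨h2, h3, h5, h7⟩ := hk
  refine ⟨fun h => h2 (key 2 (by norm_num) (by simpa using h)),
    fun h => h3 (key 3 (by norm_num) (by simpa using h)),
    fun h => h5 (key 5 (by norm_num) (by simpa using h)),
    fun h => h7 (key 7 (by norm_num) (by simpa using h))⟩

theorem JP_zero (h : NZ k) (A : ℕ → k) (h0 : A 0 = 0) (h1 : A 1 = 0) (h2 : A 2 = 0)
    (h3 : A 3 = 0) : JP (bf 8 A) (70 * A 4) := by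
  have n35 := h.n35
  rw [JP_bf h]
  obtain ⟨n2, n3, n5, n7⟩ := h
  simp only [qq, pp, mm, hh, kk, gg, h0, h1, h2, h3]
  refine ⟨?_, ?_, ?_, ?_, ?_, ?_, ?_⟩ <;> field_simp <;> ring

theorem bf_coeff (n i : ℕ) (hi : i < n + 1) (A : ℕ → k) :
    coeff (Finsupp.single (0 : Fin 2) i + Finsupp.single 1 (n - i)) (bf n A) =
      (n.choose i : k) * A i := by
  unfold bf
  rw [coeff_sum, Finset.sum_eq_single i]
  · have : (C ((n.choose i : k) * A i) * X 0 ^ i * X 1 ^ (n - i) : MvPolynomial (Fin 2) k) =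
      monomial (Finsupp.single (0 : Fin 2) i + Finsupp.single 1 (n - i)) ((n.choose i : k) * A i) := by
      rw [X_pow_eq_monomial, X_pow_eq_monomial, C_mul_monomial, monomial_mul]; simp
    rw [this, coeff_monomial, if_pos rfl]
  · intro j _ hj
    have : (C ((n.choose j : k) * A j) * X 0 ^ j * X 1 ^ (n - j) : MvPolynomial (Fin 2) k) =
      monomial (Finsupp.single (0 : Fin 2) j + Finsupp.single 1 (n - j)) ((n.choose j : k) * A j) := by
      rw [X_pow_eq_monomial, X_pow_eq_monomial, C_mul_monomial, monomial_mul]; simp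
    rw [this, coeff_monomial, if_neg]
    intro he
    apply hj
    have := DFunLike.congr_fun he (0 : Fin 2)
    simpa using this
  · intro hn
    exact absurd (Finset.mem_range.2 hi) hn

theorem bf4_inj (h : NZ k) {A B : ℕ → k} (hAB : bf 4 A = bf 4 B) (i : ℕ) (hi : i < 5) :
    A i = B i := by
  have h1 := bf_coeff 4 i hi A
  rw [hAB, bf_coeff 4 i hi B] at h1
  exact (mul_left_cancel₀ (choose4 h i hi) h1).symm

theorem dvd4_iff (h : NZ k) (A : ℕ → k) (m : ℕ) (hm : m ≤ 9) :
    (X 0 ^ m : MvPolynomial (Fin 2) k) ∣ bf 8 A ↔ ∀ i < m, A i = 0 := by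
  constructor
  · rintro ⟨q, hq⟩ i hi
    have h1 := bf_coeff 8 i (by omega) A
    rw [hq, X_pow_eq_monomial, coeff_monomial_mul', if_neg] at h1
    · have := choose8 h i (by omega)
      simpa [this] using h1.symm
    · intro hle
      have := hle 0
      simp at this; omega
  · intro hA
    unfold bf
    apply Finset.dvd_sum
    intro i _
    by_cases hi : i < m
    · rw [hA i hi]; simp
    · apply dvd_mul_of_dvd_left
      apply dvd_mul_of_dvd_right
      exact pow_dvd_pow _ (by omega)

/-- the substitution with given images of the variables -/
def sb (p q u v : k) : MvPolynomial (Fin 2) k →ₐ[k] MvPolynomial (Fin 2) k :=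
  aeval ![C p * X 0 + C q * X 1, C u * X 0 + C v * X 1]

theorem sb_X0 (p q u v : k) : sb p q u v (X 0) = C p * X 0 + C q * X 1 := by simp [sb]

theorem sb_X1 (p q u v : k) : sb p q u v (X 1) = C u * X 0 + C v * X 1 := by simp [sb]

theorem sb_C (p q u v c : k) : sb p q u v (C c) = C c := by simp [sb]

theorem sb_num (p q u v : k) (n : ℕ) [n.AtLeastTwo] :
    sb p q u v (ofNat(n) : MvPolynomial (Fin 2) k) = ofNat(n) := map_ofNat (sb p q u v) n

theorem sb_SL (p q u v : k) (h : p * v - q * u = 1) : IsSL (sb p q u v) :=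
  ⟨p, q, u, v, h, sb_X0 .., sb_X1 ..⟩

theorem hom_ext' (s t : MvPolynomial (Fin 2) k →ₐ[k] MvPolynomial (Fin 2) k)
    (h0 : s (X 0) = t (X 0)) (h1 : s (X 1) = t (X 1)) : s = t := by
  apply MvPolynomial.algHom_ext
  intro i
  fin_cases i
  · exact h0
  · exact h1

theorem SL_C {s : MvPolynomial (Fin 2) k →ₐ[k] MvPolynomial (Fin 2) k} (c : k) :
    s (C c) = C c := s.commutes c

theorem IsSL.inv {s : MvPolynomial (Fin 2) k →ₐ[k] MvPolynomial (Fin 2) k} (hs : IsSL s) :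
    ∃ t : MvPolynomial (Fin 2) k →ₐ[k] MvPolynomial (Fin 2) k, IsSL t ∧
      (∀ F, t (s F) = F) ∧ (∀ F, s (t F) = F) := by
  obtain ⟨p, q, u, v, hd, e0, e1⟩ := hs
  refine ⟨sb v (-q) (-u) p, sb_SL _ _ _ _ (by linear_combination hd), ?_, ?_⟩
  · have hC : (C p * C v - C q * C u : MvPolynomial (Fin 2) k) = 1 := by
      rw [← map_mul, ← map_mul, ← map_sub, hd, map_one]
    have : (sb v (-q) (-u) p).comp s = AlgHom.id k _ := by
      apply hom_ext'
      · simp only [AlgHom.comp_apply, e0, map_add, map_mul, sb_X0, sb_X1, sb_C, AlgHom.id_apply,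
          map_neg]
        linear_combination X 0 * hC
      · simp only [AlgHom.comp_apply, e1, map_add, map_mul, sb_X0, sb_X1, sb_C, AlgHom.id_apply,
          map_neg]
        linear_combination X 1 * hC
    intro F
    exact DFunLike.congr_fun this F
  · have hC : (C p * C v - C q * C u : MvPolynomial (Fin 2) k) = 1 := by
      rw [← map_mul, ← map_mul, ← map_sub, hd, map_one]
    have : s.comp (sb v (-q) (-u) p) = AlgHom.id k _ := by
      apply hom_ext'
      · simp only [AlgHom.comp_apply, e0, e1, map_add, map_mul, sb_X0, sb_X1, SL_C, AlgHom.id_apply,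
          map_neg]
        linear_combination X 0 * hC
      · simp only [AlgHom.comp_apply, e0, e1, map_add, map_mul, sb_X0, sb_X1, SL_C, AlgHom.id_apply,
          map_neg]
        linear_combination X 1 * hC
    intro F
    exact DFunLike.congr_fun this F

theorem IsSL.comp {s t : MvPolynomial (Fin 2) k →ₐ[k] MvPolynomial (Fin 2) k} (hs : IsSL s)
    (ht : IsSL t) : IsSL (s.comp t) := by
  obtain ⟨p, q, u, v, hd, e0, e1⟩ := hs
  obtain ⟨p', q', u', v', hd', e0', e1'⟩ := ht
  refine ⟨p' * p + q' * u, p' * q + q' * v, u' * p + v' * u, u' * q + v' * v, ?_, ?_, ?_⟩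
  · linear_combination (p' * v' - q' * u') * hd + hd'
  · simp only [AlgHom.comp_apply, e0', e0, e1, map_add, map_mul, SL_C]; ring
  · simp only [AlgHom.comp_apply, e1', e0, e1, map_add, map_mul, SL_C]; ring

theorem root_back {s : MvPolynomial (Fin 2) k →ₐ[k] MvPolynomial (Fin 2) k} (hs : IsSL s)
    (F : MvPolynomial (Fin 2) k) (h : ∃ x0 y0 : k, HasRootOfMultExactly (s F) x0 y0 4) :
    ∃ x0 y0 : k, HasRootOfMultExactly F x0 y0 4 := by
  obtain ⟨t, ht, h1, h2⟩ := hs.inv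
  obtain ⟨x0, y0, hxy, hd, hnd⟩ := h
  obtain ⟨p, q, u, v, hdet, e0, e1⟩ := ht
  have hL : t (C y0 * X 0 - C x0 * X 1) =
      C (y0 * p - x0 * u) * X 0 - C (x0 * v - y0 * q) * X 1 := by
    simp only [e0, e1, map_sub, map_mul, SL_C]; ring
  refine ⟨x0 * v - y0 * q, y0 * p - x0 * u, ?_, ?_, ?_⟩
  · rintro ⟨ha, hb⟩
    apply hxy
    constructor
    · linear_combination p * ha + q * hb - x0 * hdet
    · linear_combination u * ha + v * hb - y0 * hdet
  · rw [← hL, ← map_pow, ← h1 F]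
    exact map_dvd t hd
  · intro h
    apply hnd
    rw [← hL, ← map_pow] at h
    have := map_dvd s h
    rwa [h2] at this

/-- substitutions of determinant one which preserve octavics -/
def Good (s : MvPolynomial (Fin 2) k →ₐ[k] MvPolynomial (Fin 2) k) : Prop :=
  IsSL s ∧ ∀ A : ℕ → k, ∃ B : ℕ → k, s (bf 8 A) = bf 8 B

theorem Good.comp {s t : MvPolynomial (Fin 2) k →ₐ[k] MvPolynomial (Fin 2) k} (hs : Good s)
    (ht : Good t) : Good (s.comp t) := by
  refine ⟨hs.1.comp ht.1, fun A => ?_⟩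
  obtain ⟨B, hB⟩ := ht.2 A
  obtain ⟨D, hD⟩ := hs.2 B
  exact ⟨D, by rw [AlgHom.comp_apply, hB, hD]⟩

theorem sh_bf (t : k) (A : ℕ → k) (n : ℕ) (hn : n = 4 ∨ n = 8) : sb 1 t 0 1 (bf n A) =
    bf n (fun i => ∑ j ∈ Finset.range (n - i + 1), ((n - i).choose j : k) * t ^ j * A (i + j)) := by
  rcases hn with rfl | rfl <;>
  · simp [C_num, sb_num, bf, Finset.sum_range_succ, Nat.choose, sb_X0, sb_X1, sb_C, map_add, map_mul, map_pow]
    ring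

theorem yh_bf (t : k) (A : ℕ → k) (n : ℕ) (hn : n = 4 ∨ n = 8) : sb 1 0 t 1 (bf n A) =
    bf n (fun i => ∑ j ∈ Finset.range (i + 1), (i.choose j : k) * t ^ j * A (i - j)) := by
  rcases hn with rfl | rfl <;>
  · simp [C_num, sb_num, bf, Finset.sum_range_succ, Nat.choose, sb_X0, sb_X1, sb_C, map_add, map_mul, map_pow]
    ring

theorem sw_bf (A : ℕ → k) (n : ℕ) (hn : n = 4 ∨ n = 8) : sb 0 1 (-1) 0 (bf n A) =
    bf n (fun i => (-1) ^ i * A (n - i)) := by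
  rcases hn with rfl | rfl <;>
  · simp [C_num, sb_num, bf, Finset.sum_range_succ, Nat.choose, sb_X0, sb_X1, sb_C, map_add, map_mul, map_pow]
    ring

theorem sh_good (t : k) : Good (sb 1 t 0 1) :=
  ⟨sb_SL _ _ _ _ (by ring), fun A => ⟨_, sh_bf t A 8 (Or.inr rfl)⟩⟩

theorem yh_good (t : k) : Good (sb 1 0 t 1) :=
  ⟨sb_SL _ _ _ _ (by ring), fun A => ⟨_, yh_bf t A 8 (Or.inr rfl)⟩⟩

theorem sw_good : Good (sb (0 : k) 1 (-1) 0) :=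
  ⟨sb_SL _ _ _ _ (by ring), fun A => ⟨_, sw_bf A 8 (Or.inr rfl)⟩⟩

theorem root_of (h : NZ k) (A : ℕ → k) (h0 : A 0 = 0) (h1 : A 1 = 0) (h2 : A 2 = 0)
    (h3 : A 3 = 0) (h4 : A 4 ≠ 0) : ∃ x0 y0 : k, HasRootOfMultExactly (bf 8 A) x0 y0 4 := by
  refine ⟨0, 1, by simp, ?_, ?_⟩
  · have := (dvd4_iff h A 4 (by norm_num)).2 (by
      intro i hi; interval_cases i <;> assumption)
    simpa using this
  · intro hd
    apply h4
    exact (dvd4_iff h A 5 (by norm_num)).1 (by simpa using hd) 4 (by norm_num)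

theorem forward (h : NZ k) (A : ℕ → k)
    (hr : ∃ x0 y0 : k, HasRootOfMultExactly (bf 8 A) x0 y0 4) : ∃ r : k, r ≠ 0 ∧ JP (bf 8 A) r := by
  obtain ⟨x0, y0, hxy, hd, hnd⟩ := hr
  have key : ∀ s : MvPolynomial (Fin 2) k →ₐ[k] MvPolynomial (Fin 2) k, ∀ c : k, c ≠ 0 → Good s →
      s (C y0 * X 0 - C x0 * X 1) = C c * X 0 → ∃ r : k, r ≠ 0 ∧ JP (bf 8 A) r := by
    intro s c hc hs he
    obtain ⟨B, hB⟩ := hs.2 A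
    obtain ⟨t, ht, h1, h2⟩ := hs.1.inv
    have d4 : (X 0 ^ 4 : MvPolynomial (Fin 2) k) ∣ bf 8 B := by
      have := map_dvd s hd
      rw [map_pow, he, mul_pow, hB] at this
      exact dvd_trans (Dvd.intro_left _ rfl) this
    have d5 : ¬ (X 0 ^ 5 : MvPolynomial (Fin 2) k) ∣ bf 8 B := by
      intro h5
      apply hnd
      rw [← hB] at h5
      have hu : IsUnit ((C c : MvPolynomial (Fin 2) k) ^ 5) :=
        ((IsUnit.mk0 c hc).map C).pow 5
      have h6 : (C c * X 0 : MvPolynomial (Fin 2) k) ^ 5 ∣ s (bf 8 A) := by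
        rw [mul_pow]; exact (hu.mul_left_dvd).2 h5
      rw [← he, ← map_pow] at h6
      have := map_dvd t h6
      rwa [h1, h1] at this
    rw [dvd4_iff h B 4 (by norm_num)] at d4
    rw [dvd4_iff h B 5 (by norm_num)] at d5
    refine ⟨70 * B 4, ?_, ?_⟩
    · have n70 : (70 : k) ≠ 0 := by
        have : (70 : k) = 2 * 35 := by norm_num
        rw [this]; exact mul_ne_zero h.1 h.n35
      refine mul_ne_zero n70 fun h4 => d5 ?_
      intro i hi
      by_cases hi4 : i = 4
      · rw [hi4, h4]
      · exact d4 i (by omega)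
    · rw [← JP_sub hs.1, hB]
      exact JP_zero h B (d4 0 (by norm_num)) (d4 1 (by norm_num)) (d4 2 (by norm_num))
        (d4 3 (by norm_num))
  by_cases hy : y0 = 0
  · subst hy
    have hx : x0 ≠ 0 := fun hx => hxy ⟨hx, rfl⟩
    refine key _ x0 hx sw_good ?_
    simp [sb_X1, sb_C, map_sub, map_mul]
  · refine key _ y0 hy (sh_good (x0 / y0)) ?_
    have : (C y0 * C (x0 / y0) : MvPolynomial (Fin 2) k) = C x0 := by
      rw [← map_mul]; congr 1; field_simp
    simp only [sb_X0, sb_X1, sb_C, map_sub, map_mul, map_one, map_zero]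
    linear_combination X 1 * this

/-- quadratic invariant of a quartic -/
def QI (K : ℕ → k) : k := K 0*K 4 - 4*(K 1*K 3) + 3*K 2^2

/-- cubic invariant of a quartic -/
def QJ (K : ℕ → k) : k :=
  K 0*K 2*K 4 + 2*(K 1*K 2*K 3) - K 0*K 3^2 - K 1^2*K 4 - K 2^3

/-- the quartic can be brought to the normal form -/
def RQ (c : k) (K : ℕ → k) : Prop :=
  ∃ s, Good s ∧ ∃ L : ℕ → k, s (bf 4 K) = bf 4 L ∧ L 0 = 0 ∧ L 1 = 0 ∧ L 2 = c ∧ L 3 = 0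

theorem RQ.step {c : k} {s : MvPolynomial (Fin 2) k →ₐ[k] MvPolynomial (Fin 2) k} (hs : Good s)
    {K K' : ℕ → k} (h : s (bf 4 K) = bf 4 K') (hK : RQ c K') : RQ c K := by
  obtain ⟨t, ht, L, hL, h0⟩ := hK
  exact ⟨t.comp s, ht.comp hs, L, by rw [AlgHom.comp_apply, h, hL], h0⟩

/-- quartic coefficients after the first shear -/
def shK (t : k) (K : ℕ → k) : ℕ → k := fun i =>
  ∑ j ∈ Finset.range (4 - i + 1), ((4 - i).choose j : k) * t ^ j * K (i + j)

/-- quartic coefficients after the second shear -/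
def yhK (t : k) (K : ℕ → k) : ℕ → k := fun i =>
  ∑ j ∈ Finset.range (i + 1), (i.choose j : k) * t ^ j * K (i - j)

/-- quartic coefficients after the swap -/
def swK (K : ℕ → k) : ℕ → k := fun i => (-1) ^ i * K (4 - i)

theorem shK_inv (t : k) (K : ℕ → k) : QI (shK t K) = QI K ∧ QJ (shK t K) = QJ K := by
  constructor <;>
  · simp [QI, QJ, shK, Finset.sum_range_succ, Nat.choose]
    ring

theorem yhK_inv (t : k) (K : ℕ → k) : QI (yhK t K) = QI K ∧ QJ (yhK t K) = QJ K := by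
  constructor <;>
  · simp [QI, QJ, yhK, Finset.sum_range_succ, Nat.choose]
    ring

theorem swK_inv (K : ℕ → k) : QI (swK K) = QI K ∧ QJ (swK K) = QJ K := by
  constructor <;>
  · simp [QI, QJ, swK]
    ring

theorem RQ1 (h : NZ k) (c : k) (hc : c ≠ 0) (K : ℕ → k) (hI : QI K = 3*c^2) (hJ : QJ K = -c^3)
    (h0 : K 0 = 0) (h1 : K 1 = 0) : RQ c K := by
  obtain ⟨n2, n3, -, -⟩ := h
  simp only [QI, QJ, h0, h1] at hI hJ
  have e2 : K 2 ^ 2 = c ^ 2 := by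
    apply mul_left_cancel₀ n3; linear_combination hI
  have e3 : K 2 = c := by
    have : c ^ 2 * K 2 = c ^ 2 * c := by linear_combination -hJ - K 2 * e2
    exact mul_left_cancel₀ (pow_ne_zero 2 hc) this
  refine ⟨_, yh_good (-K 3 / (3 * c)), _, yh_bf _ K 4 (Or.inl rfl), ?_, ?_, ?_, ?_⟩
  · simp [h0]
  · simp [Finset.sum_range_succ, h0, h1]
  · simp [Finset.sum_range_succ, Nat.choose, h0, h1, e3]
  · simp [Finset.sum_range_succ, Nat.choose, h0, h1, e3]
    field_simp
    ring

theorem RQ2 (h : NZ k) (c : k) (hc : c ≠ 0) (K : ℕ → k) (hI : QI K = 3*c^2) (hJ : QJ K = -c^3)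
    (h0 : K 0 = 0) : RQ c K := by
  by_cases h1 : K 1 = 0
  · exact RQ1 h c hc K hI hJ h0 h1
  have n2 := h.1
  set t := (c - K 2) / (2 * K 1) with ht
  apply RQ.step (yh_good t) (yh_bf t K 4 (Or.inl rfl))
  change RQ c (yhK t K)
  apply RQ.step sw_good (sw_bf _ 4 (Or.inl rfl))
  change RQ c (swK (yhK t K))
  obtain ⟨i1, j1⟩ := yhK_inv t K
  obtain ⟨i2, j2⟩ := swK_inv (yhK t K)
  rw [hI] at i1; rw [hJ] at j1
  have e0 : yhK t K 0 = 0 := by simp [yhK, h0]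
  have e1 : yhK t K 1 = K 1 := by simp [yhK, Finset.sum_range_succ, h0]
  have e2 : yhK t K 2 = c := by
    simp [yhK, Finset.sum_range_succ, Nat.choose, h0, ht]; field_simp; ring
  generalize yhK t K = M at *
  have e3 : M 3 = 0 := by
    simp only [QI, e0, e1, e2] at i1
    have : (2 ^ 2 * K 1) * M 3 = 0 := by linear_combination -i1
    simpa [n2, h1] using this
  have e4 : M 4 = 0 := by
    simp only [QJ, e0, e1, e2, e3] at j1
    have : (K 1) ^ 2 * M 4 = 0 := by linear_combination -j1
    simpa [h1] using this
  apply RQ1 h c hc _ (i2.trans i1) (j2.trans j1)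
  · simp [swK, e4]
  · simp [swK, e3]

theorem RQ3 [IsAlgClosed k] (h : NZ k) (c : k) (hc : c ≠ 0) (K : ℕ → k) (hI : QI K = 3*c^2)
    (hJ : QJ K = -c^3) : RQ c K := by
  by_cases h4 : K 4 = 0
  · apply RQ.step sw_good (sw_bf _ 4 (Or.inl rfl))
    change RQ c (swK K)
    obtain ⟨i2, j2⟩ := swK_inv K
    exact RQ2 h c hc _ (i2.trans hI) (j2.trans hJ) (by simp [swK, h4])
  · obtain ⟨t, ht⟩ := IsAlgClosed.exists_root
      (Polynomial.C (K 4) * Polynomial.X ^ 4 + Polynomial.C (4 * K 3) * Polynomial.X ^ 3 +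
        Polynomial.C (6 * K 2) * Polynomial.X ^ 2 + Polynomial.C (4 * K 1) * Polynomial.X +
        Polynomial.C (K 0)) (by
        have : Polynomial.degree (Polynomial.C (K 4) * Polynomial.X ^ 4 +
          Polynomial.C (4 * K 3) * Polynomial.X ^ 3 +
          Polynomial.C (6 * K 2) * Polynomial.X ^ 2 + Polynomial.C (4 * K 1) * Polynomial.X +
          Polynomial.C (K 0)) = 4 := by compute_degree!
        rw [this]; norm_num)
    simp only [Polynomial.IsRoot, Polynomial.eval_add, Polynomial.eval_mul, Polynomial.eval_C,
      Polynomial.eval_pow, Polynomial.eval_X] at ht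
    apply RQ.step (sh_good t) (sh_bf t K 4 (Or.inl rfl))
    change RQ c (shK t K)
    obtain ⟨i2, j2⟩ := shK_inv t K
    refine RQ2 h c hc _ (i2.trans hI) (j2.trans hJ) ?_
    simp [shK, Finset.sum_range_succ, Nat.choose]
    linear_combination ht

theorem kk_scale (σ l : k) (a : ℕ → k) (i : ℕ) :
    kk (fun i => σ * l ^ i * a i) i = σ ^ 2 * l ^ (6 + i) * kk a i := by
  match i with
  | 0 => simp only [kk]; ring
  | 1 => simp only [kk]; ring
  | 2 => simp only [kk]; ring
  | 3 => simp only [kk]; ring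
  | 4 => simp only [kk]; ring
  | n + 5 => simp [kk]

theorem gg_scale (σ l : k) (a : ℕ → k) (i : ℕ) :
    gg (fun i => σ * l ^ i * a i) i = σ ^ 2 * l ^ (4 + i) * gg a i := by
  match i with
  | 0 => simp only [gg]; ring
  | 1 => simp only [gg]; ring
  | 2 => simp only [gg]; ring
  | 3 => simp only [gg]; ring
  | 4 => simp only [gg]; ring
  | 5 => simp only [gg]; ring
  | 6 => simp only [gg]; ring
  | 7 => simp only [gg]; ring
  | 8 => simp only [gg]; ring
  | n + 9 => simp [gg]

theorem JP_scale (h : NZ k) (σ l : k) (hσ : σ ≠ 0) (hl : l ≠ 0) (a : ℕ → k) (r : k)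
    (hJ : JP (bf 8 (fun i => σ * l ^ i * a i)) (σ * l ^ 4 * r)) : JP (bf 8 a) r := by
  rw [JP_bf h] at hJ ⊢
  have hw : ∀ d : ℕ, (σ * l ^ 4) ^ d ≠ 0 := fun d => pow_ne_zero d (mul_ne_zero hσ (pow_ne_zero 4 hl))
  simp only [qq, pp, mm, hh, kk_scale, gg_scale] at hJ ⊢
  generalize kk a = K at *
  generalize gg a = G at *
  obtain ⟨h2, h3, h4, h5, h6, h7, h8⟩ := hJ
  refine ⟨?_, ?_, ?_, ?_, ?_, ?_, ?_⟩
  · apply mul_left_cancel₀ (hw 2); linear_combination h2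
  · apply mul_left_cancel₀ (hw 3); linear_combination h3
  · apply mul_left_cancel₀ (hw 4); linear_combination h4
  · apply mul_left_cancel₀ (hw 5); linear_combination h5
  · apply mul_left_cancel₀ (hw 6); linear_combination h6
  · apply mul_left_cancel₀ (hw 7); linear_combination h7
  · apply mul_left_cancel₀ (hw 8); linear_combination h8

theorem core_norm (h : NZ k) (a : ℕ → k) (β : k) (hβ : β = 0 ∨ β = 1) (hJ : JP (bf 8 a) 70)
    (k0 : kk a 0 = 0) (k1 : kk a 1 = 0) (k2 : 3 * kk a 2 = -25) (k3 : kk a 3 = 0)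
    (k4 : kk a 4 = 50 * β) :
    a 4 = 1 ∧ ((a 0 = 0 ∧ a 1 = 0 ∧ a 2 = 0 ∧ a 3 = 0) ∨
      (a 5 = 0 ∧ a 6 = 0 ∧ a 7 = 0 ∧ a 8 = 0)) := by
  have n35 := h.n35
  rw [JP_bf h] at hJ
  obtain ⟨n2, n3, n5, n7⟩ := h
  obtain ⟨h2, h3, -, h5, -, h7, h8⟩ := hJ
  have k2' : kk a 2 = -25 / 3 := by field_simp; linear_combination k2
  simp only [pp, mm, hh, k0, k1, k2', k3, k4] at h5 h7 h8
  have m5 : a 4 - 2 * β * a 2 + β ^ 2 * a 0 = 1 := by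
    have : (2^5 * 3^2 * 5^5 * 7^5 : k) * (a 4 - 2 * β * a 2 + β ^ 2 * a 0) = 2^5 * 3^2 * 5^5 * 7^5 := by
      field_simp at h5
      linear_combination h5
    apply mul_left_cancel₀ _ (this.trans (mul_one _).symm)
    simp [n2, n3, n5, n7]
  have m7 : a 4 + β * a 2 - 2 * β ^ 2 * a 0 = 1 := by
    have : (2^7 * 3^2 * 5^7 * 7^7 : k) * (a 4 + β * a 2 - 2 * β ^ 2 * a 0) = 2^7 * 3^2 * 5^7 * 7^7 := by
      field_simp at h7
      linear_combination h7
    apply mul_left_cancel₀ _ (this.trans (mul_one _).symm)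
    simp [n2, n3, n5, n7]
  have m8 : 7 * (β * gg a 2 - 2 * β ^ 2 * gg a 0 + gg a 4) = 9 := by
    have : (2^8 * 3^2 * 5^8 * 7^8 : k) * (7 * (β * gg a 2 - 2 * β ^ 2 * gg a 0 + gg a 4)) =
        (2^8 * 3^2 * 5^8 * 7^8 : k) * 9 := by
      field_simp at h8
      linear_combination h8
    apply mul_left_cancel₀ _ this
    simp [n2, n3, n5, n7]
  have m2 : qq a a = 70 := by
    have : (2^2 * 5 * 7 : k) * qq a a = (2^2 * 5 * 7 : k) * 70 := by linear_combination h2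
    apply mul_left_cancel₀ _ this
    simp [n2, n3, n5, n7]
  have m3 : qq a (gg a) = 90 := by
    have : (2^2 * 5^2 * 7^3 : k) * qq a (gg a) = (2^2 * 5^2 * 7^3 : k) * 90 := by
      field_simp at h3
      linear_combination h3
    apply mul_left_cancel₀ _ this
    simp [n2, n3, n5, n7]
  have g2 : 35 * gg a 2 = 5 * (3*(a 0*a 6) - 4*(a 1*a 5) - 11*(a 2*a 4) + 12*(a 3*a 3)) := by
    simp only [gg]; field_simp; ring
  have g4 : 35 * gg a 4 = a 0*a 8 + 12*(a 1*a 7) - 22*(a 2*a 6) - 36*(a 3*a 5) + 45*(a 4*a 4) := by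
    simp only [gg]; field_simp
  have g0 : gg a 0 = 2*(a 0*a 4) - 8*(a 1*a 3) + 6*(a 2*a 2) := rfl
  have k2'' : 3 * kk a 2 = a 0*a 8 - 2*(a 1*a 7) - 8*(a 2*a 6) + 34*(a 3*a 5) - 25*(a 4*a 4) := by
    simp only [kk]; field_simp
  rw [k2''] at k2
  have m3' : 6 * (a 0*a 4*a 8 - 4*a 1*a 3*a 8 + 3*a 2^2*a 8 + 12*a 1*a 4*a 7 - 4*a 0*a 5*a 7
      - 8*a 2*a 3*a 7 - 22*a 2*a 4*a 6 - 8*a 1*a 5*a 6 + 3*a 0*a 6^2 + 24*a 3^2*a 6 - 36*a 3*a 4*a 5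
      + 24*a 2*a 5^2 + 15 * a 4^3) = 90 := by
    rw [← m3]
    simp only [qq, gg]
    field_simp
    ring
  simp only [kk] at k0 k1 k3 k4
  simp only [qq] at m2
  have e35 : 35 * (β * gg a 2 - 2 * β ^ 2 * gg a 0 + gg a 4) = 45 := by linear_combination 5 * m8
  rcases hβ with rfl | rfl
  · have a4 : a 4 = 1 := by linear_combination m5
    refine ⟨a4, ?_⟩
    rw [a4] at k0 k1 k2 k3 k4 m2 m3' g4
    apply core_zero n2 n3 n5 n7
    · apply mul_left_cancel₀ n2; linear_combination k0
    · linear_combination k1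
    · linear_combination k2
    · linear_combination k3
    · apply mul_left_cancel₀ n2; linear_combination k4
    · apply mul_left_cancel₀ n2; linear_combination m2
    · linear_combination e35 - g4
    · apply mul_left_cancel₀ n2; apply mul_left_cancel₀ n3; linear_combination m3'
  · have a2 : a 2 = a 0 := by apply mul_left_cancel₀ n3; linear_combination m7 - m5
    have a4 : a 4 = 1 + a 0 := by linear_combination m5 + 2 * a2
    rw [a2, a4] at k0 k2 k3 k4 m2 m3' g4 g2 g0
    rw [a2, a4] at k1
    obtain ⟨r0, r1, r3⟩ := core_one n2 n3 n5 n7 (a 0) (a 1) (a 3) (a 5) (a 6) (a 7) (a 8)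
      (by apply mul_left_cancel₀ n2; linear_combination k0)
      (by linear_combination k1)
      (by linear_combination k2)
      (by linear_combination k3)
      (by apply mul_left_cancel₀ n2; linear_combination k4)
      (by apply mul_left_cancel₀ n2; linear_combination m2)
      (by linear_combination e35 - g4 - g2 + 70 * g0)
      (by apply mul_left_cancel₀ n2; apply mul_left_cancel₀ n3; linear_combination m3')
    exact ⟨by rw [a4, r0, add_zero], Or.inl ⟨r0, r1, by rw [a2, r0], r3⟩⟩

theorem backward_aux [IsAlgClosed k] (h : NZ k) (B : ℕ → k) (ρ : k) (hρ : ρ ≠ 0)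
    (hJ : JP (bf 8 B) (ρ * 70)) (k0 : kk B 0 = 0) (k1 : kk B 1 = 0)
    (k2 : 3 * kk B 2 = -25 * ρ ^ 2) (k3 : kk B 3 = 0) :
    B 4 ≠ 0 ∧ ((B 0 = 0 ∧ B 1 = 0 ∧ B 2 = 0 ∧ B 3 = 0) ∨
      (B 5 = 0 ∧ B 6 = 0 ∧ B 7 = 0 ∧ B 8 = 0)) := by
  have n50 : (50 : k) ≠ 0 := by
    have : (50 : k) = 2 * 5 ^ 2 := by norm_num
    rw [this]; exact mul_ne_zero h.1 (pow_ne_zero 2 h.2.2.1)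
  obtain ⟨l, β, hl, hβ, hb⟩ : ∃ l β : k, l ≠ 0 ∧ (β = 0 ∨ β = 1) ∧
      kk B 4 = 50 * β * l ^ 2 * ρ ^ 2 := by
    by_cases hb : kk B 4 = 0
    · exact ⟨1, 0, one_ne_zero, Or.inl rfl, by rw [hb]; ring⟩
    · obtain ⟨l, hl⟩ := IsAlgClosed.exists_pow_nat_eq (kk B 4 / (50 * ρ ^ 2)) (n := 2) (by norm_num)
      refine ⟨l, 1, ?_, Or.inr rfl, ?_⟩
      · rintro rfl
        have : kk B 4 / (50 * ρ ^ 2) ≠ 0 := div_ne_zero hb (mul_ne_zero n50 (pow_ne_zero 2 hρ))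
        apply this; rw [← hl]; ring
      · rw [hl]; field_simp
  obtain ⟨σ, hσ⟩ : ∃ σ : k, ρ = σ * l ^ 4 := ⟨ρ / l ^ 4, by field_simp⟩
  have hσ0 : σ ≠ 0 := by rintro rfl; apply hρ; rw [hσ]; ring
  obtain ⟨a, rfl⟩ : ∃ a : ℕ → k, B = fun i => σ * l ^ i * a i :=
    ⟨fun i => B i / (σ * l ^ i), by funext i; field_simp⟩
  subst hσ
  have hJ' := JP_scale h σ l hσ0 hl a 70 hJ
  simp only [kk_scale] at k0 k1 k2 k3 hb
  have hw : ∀ d : ℕ, σ ^ 2 * l ^ d ≠ 0 := fun d => mul_ne_zero (pow_ne_zero 2 hσ0) (pow_ne_zero d hl)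
  obtain ⟨h4, h5⟩ := core_norm h a β hβ hJ' (by simpa [hσ0, hl] using k0)
    (by simpa [hσ0, hl] using k1)
    (by apply mul_left_cancel₀ (hw 8); linear_combination k2)
    (by simpa [hσ0, hl] using k3)
    (by apply mul_left_cancel₀ (hw 10); linear_combination hb)
  refine ⟨by simp [h4, hσ0, hl], ?_⟩
  rcases h5 with ⟨x0, x1, x2, x3⟩ | ⟨x0, x1, x2, x3⟩
  · left; simp [x0, x1, x2, x3]
  · right; simp [x0, x1, x2, x3]

theorem backward [IsAlgClosed k] (h : NZ k) (A : ℕ → k) (r : k) (hr : r ≠ 0)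
    (hJ : JP (bf 8 A) r) : ∃ x0 y0 : k, HasRootOfMultExactly (bf 8 A) x0 y0 4 := by
  have n70 : (70 : k) ≠ 0 := by
    have : (70 : k) = 2 * 35 := by norm_num
    rw [this]; exact mul_ne_zero h.1 h.n35
  obtain ⟨n2, n3, n5, n7⟩ := id h
  obtain ⟨ρ, rfl⟩ : ∃ ρ, r = ρ * 70 := ⟨r / 70, by field_simp⟩
  have hρ : ρ ≠ 0 := by rintro rfl; apply hr; ring
  obtain ⟨c, hc⟩ : ∃ c : k, 3 * c = -25 * ρ ^ 2 := ⟨-25 * ρ ^ 2 / 3, by field_simp⟩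
  have hc0 : c ≠ 0 := by
    rintro rfl
    have : (5 ^ 2 : k) * ρ ^ 2 = 0 := by linear_combination hc
    revert this; simp [n5, hρ]
  have hI : QI (kk A) = 3 * c ^ 2 := by
    have h4 := ((JP_bf h A _).1 hJ).2.2.1
    have : (2 ^ 10 * 3 * 7 ^ 4 : k) * QI (kk A) = (2 ^ 10 * 3 * 7 ^ 4 : k) * (3 * c ^ 2) := by
      simp only [pp] at h4
      simp only [QI]
      linear_combination h4 - 2 ^ 10 * 7 ^ 4 * (3 * c - 25 * ρ ^ 2) * hc
    apply mul_left_cancel₀ _ this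
    simp [n2, n3, n7]
  have hQ : QJ (kk A) = - c ^ 3 := by
    have h6 := ((JP_bf h A _).1 hJ).2.2.2.2.1
    have e2 : 3 * hh (kk A) 2 =
        kk A 0*kk A 4 + 2*(kk A 1*kk A 3) - 3*(kk A 2*kk A 2) := by
      simp only [hh]; field_simp
    have : (2 ^ 15 * 3 ^ 3 * 7 ^ 6 : k) * QJ (kk A) = (2 ^ 15 * 3 ^ 3 * 7 ^ 6 : k) * (- c ^ 3) := by
      have e0 : hh (kk A) 0 = 2*(kk A 0*kk A 2) - 2*(kk A 1*kk A 1) := rfl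
      have e1 : hh (kk A) 1 = kk A 0*kk A 3 - kk A 1*kk A 2 := rfl
      have e3 : hh (kk A) 3 = kk A 1*kk A 4 - kk A 2*kk A 3 := rfl
      have e4 : hh (kk A) 4 = 2*(kk A 2*kk A 4) - 2*(kk A 3*kk A 3) := rfl
      simp only [pp] at h6
      rw [e0, e1, e3, e4] at h6
      simp only [QJ]
      linear_combination h6 + 2 ^ 15 * 3 ^ 2 * 7 ^ 6 * kk A 2 * (-e2) +
        2 ^ 15 * 7 ^ 6 * (9 * c ^ 2 - 75 * c * ρ ^ 2 + 625 * ρ ^ 4) * hc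
    apply mul_left_cancel₀ _ this
    simp [n2, n3, n7]
  obtain ⟨s, hs, L, hL, l0, l1, l2, l3⟩ := RQ3 h c hc0 (kk A) hI hQ
  obtain ⟨B, hB⟩ := hs.2 A
  apply root_back hs.1
  rw [← JP_sub hs.1] at hJ
  rw [hB] at hJ ⊢
  have hk : bf 4 (kk B) = bf 4 L := by
    rw [← hL, ← tr886 h B, ← hB, transvectant_sub hs.1, tr886 h A]
  have e := bf4_inj h hk
  obtain ⟨h4, h5⟩ := backward_aux h B ρ hρ hJ (by rw [e 0 (by norm_num), l0])
    (by rw [e 1 (by norm_num), l1]) (by rw [e 2 (by norm_num), l2, hc])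
    (by rw [e 3 (by norm_num), l3])
  rcases h5 with ⟨x0, x1, x2, x3⟩ | ⟨x0, x1, x2, x3⟩
  · exact root_of h B x0 x1 x2 x3 h4
  · apply root_back sw_good.1
    rw [sw_bf B 8 (Or.inr rfl)]
    apply root_of h <;> simp [x0, x1, x2, x3, h4]

/-- A nonzero binary octavic has a root of multiplicity exactly four if and only if its
invariants are of the form `J_2 = 2r², J_3 = 2²·3·r³, J_4 = 2⁶·r⁴, J_5 = 2⁶·r⁵, J_6 = 2⁹·r⁶,
J_7 = 2⁹·r⁷, J_8 = 2¹¹·3²·r⁸` for some `r ≠ 0`; moreover for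
`f = x⁴(ax⁴ + bx³y + cx²y² + dxy³ + ey⁴)` these identities hold with `r = e`. -/
theorem hasRootOfMultFour_iff_J (k : Type*) [Field k] [IsAlgClosed k] (hk : CharOK k)
    (a : Fin 9 → k) (ha : octForm a ≠ 0) :
    ((∃ x0 y0 : k, HasRootOfMultExactly (octForm a) x0 y0 4) ↔
      ∃ r : k, r ≠ 0 ∧
        J2 a = 2 * r ^ 2 ∧
        J3 a = 2 ^ 2 * 3 * r ^ 3 ∧
        J4 a = 2 ^ 6 * r ^ 4 ∧
        J5 a = 2 ^ 6 * r ^ 5 ∧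
        J6 a = 2 ^ 9 * r ^ 6 ∧
        J7 a = 2 ^ 9 * r ^ 7 ∧
        J8 a = 2 ^ 11 * 3 ^ 2 * r ^ 8) ∧
    (∀ p q c d e : k, a = ![0, 0, 0, 0, e, d, c, q, p] →
      J2 a = 2 * e ^ 2 ∧
      J3 a = 2 ^ 2 * 3 * e ^ 3 ∧
      J4 a = 2 ^ 6 * e ^ 4 ∧
      J5 a = 2 ^ 6 * e ^ 5 ∧
      J6 a = 2 ^ 9 * e ^ 6 ∧
      J7 a = 2 ^ 9 * e ^ 7 ∧
      J8 a = 2 ^ 11 * 3 ^ 2 * e ^ 8) := by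
  have h := NZ_of hk
  constructor
  · constructor
    · intro hr
      rw [oct_bf h] at hr
      obtain ⟨r, hr0, hJ⟩ := forward h _ hr
      rw [← oct_bf h] at hJ
      exact ⟨r, hr0, (JP_oct a r).1 hJ⟩
    · rintro ⟨r, hr0, hJ⟩
      have hJ' := (JP_oct a r).2 hJ
      rw [oct_bf h] at hJ' ⊢
      exact backward h _ r hr0 hJ'
  · intro p q c d e hae
    refine (JP_oct a e).1 ?_
    rw [oct_bf h]
    have n70 : (70 : k) ≠ 0 := by
      have : (70 : k) = 2 * 35 := by norm_num
      rw [this]; exact mul_ne_zero h.1 h.n35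
    have e4 : 70 * nrm a 4 = e := by
      have h1 : nrm a 4 = e / 70 := by
        subst hae
        simp [nrm, Nat.choose]
      rw [h1]; field_simp
    have := JP_zero h (nrm a) (by subst hae; simp [nrm]) (by subst hae; simp [nrm])
      (by subst hae; simp [nrm]) (by subst hae; simp [nrm])
    rwa [e4] at this

end
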